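/- Let n ≥ 2, 0 < α < 1 and 0 < s ≤ 1/2. Suppose u ∈ 𝓛_{2s,α}(ℝⁿ×ℝ) is a distributional solution of ∂_t^α u + (-Δ)^s u = 0 in ℝⁿ×ℝ, i.e. ∫_ℝ ∫_{ℝⁿ} u(x,t)·[D_right^α φ(x,t) + (-Δ)^s φ(x,t)] dx dt = 0 for every real-valued Schwartz function φ on ℝⁿ×ℝ. Then u is equal almost everywhere to a constant. -/

import Mathlib

open MeasureTheory Set

/-- The normalization constant `C_α = 1/|Γ(-α)|` for the Marchaud fractional derivative. -/
noncomputable def Calpha (α : ℝ) : ℝ := 1 / |Real.Gamma (-α)|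

/-- The normalization constant `C_{n,s} = 4^s Γ(n/2+s)/(π^{n/2}|Γ(-s)|)` for the
fractional Laplacian. -/
noncomputable def Cns (n : ℕ) (s : ℝ) : ℝ :=
  (4 : ℝ) ^ s * Real.Gamma ((n : ℝ) / 2 + s) / (Real.pi ^ ((n : ℝ) / 2) * |Real.Gamma (-s)|)

/-- The right Marchaud fractional derivative of order `α` in the time variable:
`D_right^α φ(x,t) = C_α ∫_t^∞ (φ(x,t) - φ(x,τ))/(τ-t)^{1+α} dτ`. -/
noncomputable def marchaudRight {n : ℕ} (α : ℝ) (φ : EuclideanSpace ℝ (Fin n) × ℝ → ℝ)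
    (x : EuclideanSpace ℝ (Fin n)) (t : ℝ) : ℝ :=
  Calpha α * ∫ τ in Ioi t, (φ (x, t) - φ (x, τ)) / (τ - t) ^ (1 + α)

/-- The fractional Laplacian `(-Δ)^s` acting in the space variable:
`(-Δ)^s φ(x,t) = (C_{n,s}/2) ∫_{ℝⁿ} (2φ(x,t) - φ(x+y,t) - φ(x-y,t))/|y|^{n+2s} dy`. -/
noncomputable def fracLap {n : ℕ} (s : ℝ) (φ : EuclideanSpace ℝ (Fin n) × ℝ → ℝ)
    (x : EuclideanSpace ℝ (Fin n)) (t : ℝ) : ℝ :=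
  Cns n s / 2 * ∫ y : EuclideanSpace ℝ (Fin n),
    (2 * φ (x, t) - φ (x + y, t) - φ (x - y, t)) / ‖y‖ ^ ((n : ℝ) + 2 * s)

/-!
The right Marchaud derivative and the fractional Laplacian are averages of finite differences, so
on Fourier integrals they act as multipliers by symbols that are smooth with positive real part
away from the origin. Dividing by the sum of the symbols in a product test function whose two
factors have Fourier transforms vanishing near `0`, one sees that `t ↦ ∫ u(x,t) f(x) dx` has
spectrum contained in `{0}` whenever `f` is such a factor. Because `2s ≤ 1` and `α < 1`, the
weights decay no faster than `(1+|x|)^{-(n+1)}` and `(1+|t|)^{-2}`, which leaves no room for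
nonconstant polynomials: mollifying at scales `r → 0` and `r → ∞` shows that a function with this
integrability and spectrum in `{0}` is constant.

The constant vanishes, because a factor with Fourier transform equal to one near `0` may be used in
the variable `t` and both operators produce functions of mean zero. Hence every slice of `u` in `x`
has spectrum in `{0}`, so `u` depends on `t` alone, and testing once more shows that it is constant.
-/

open scoped FourierTransform RealInnerProductSpace ContDiff

section IteratedDifference

variable {V E F : Type*} [AddCommGroup V] [Module ℝ V] [AddCommGroup E] [AddCommGroup F]

/-- The product of the difference operators `f ↦ f - f (· + k • y)` over the steps `k ∈ ks`, at
`x`; so `[1]` gives `f x - f (x + y)` and `[1, -1]` gives `2 f x - f (x + y) - f (x - y)`. -/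
def iterDiff : List ℝ → (V → E) → V → V → E
  | [], f, x, _ => f x
  | k :: ks, f, x, y => iterDiff ks f x y - iterDiff ks f (x + k • y) y

lemma iterDiff_one (f : V → E) (x y : V) : iterDiff [1] f x y = f x - f (x + y) := by
  simp [iterDiff]

lemma iterDiff_one_neg_one (f : V → ℝ) (x y : V) :
    iterDiff [1, -1] f x y = 2 * f x - f (x + y) - f (x - y) := by
  simp only [iterDiff, one_smul, neg_smul, add_assoc, add_neg_cancel,
    add_zero, sub_eq_add_neg x]
  ring

lemma iterDiff_map (L : E →+ F) (ks : List ℝ) (f : V → E) (x y : V) :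
    iterDiff ks (fun x' => L (f x')) x y = L (iterDiff ks f x y) := by
  induction ks generalizing x with
  | nil => rfl
  | cons k ks ih => simp only [iterDiff, ih, map_sub]

lemma integrable_iterDiff {Z E : Type*} [MeasurableSpace Z] {μ : Measure Z}
    [NormedAddCommGroup E] {F : Z → V → E} (hF : ∀ x, Integrable (fun z => F z x) μ)
    (ks : List ℝ) (x y : V) : Integrable (fun z => iterDiff ks (F z) x y) μ := by
  induction ks generalizing x with
  | nil => exact hF x
  | cons k ks ih => exact (ih x).sub (ih _)

lemma iterDiff_integral {Z E : Type*} [MeasurableSpace Z] {μ : Measure Z}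
    [NormedAddCommGroup E] [NormedSpace ℝ E] {F : Z → V → E}
    (hF : ∀ x, Integrable (fun z => F z x) μ) (ks : List ℝ) (x y : V) :
    iterDiff ks (fun x' => ∫ z, F z x' ∂μ) x y = ∫ z, iterDiff ks (F z) x y ∂μ := by
  induction ks generalizing x with
  | nil => rfl
  | cons k ks ih =>
    simp only [iterDiff, ih]
    exact (integral_sub (integrable_iterDiff hF ks _ _) (integrable_iterDiff hF ks _ _)).symm

end IteratedDifference

section IteratedDifferenceNormed

variable {V : Type*} [NormedAddCommGroup V] [NormedSpace ℝ V]

lemma continuous_uncurry_iterDiff {E : Type*} [NormedAddCommGroup E] {f : V → E}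
    (hf : Continuous f) (ks : List ℝ) :
    Continuous fun p : V × V => iterDiff ks f p.1 p.2 := by
  induction ks with
  | nil => exact hf.comp continuous_fst
  | cons k ks ih =>
    exact ih.sub (ih.comp (g := fun p : V × V => iterDiff ks f p.1 p.2)
      (f := fun p : V × V => (p.1 + k • p.2, p.2)) (by fun_prop))

end IteratedDifferenceNormed

section Characters

/-- The factor by which `iterDiff ks · x y` multiplies a character, where `θ` is the phase of the
character at `y`. -/
noncomputable def diffFactor (ks : List ℝ) (θ : ℝ) : ℂ :=
  (ks.map fun k => 1 - (𝐞 (k * θ) : ℂ)).prod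

lemma diffFactor_cons (k : ℝ) (ks : List ℝ) (θ : ℝ) :
    diffFactor (k :: ks) θ = (1 - (𝐞 (k * θ) : ℂ)) * diffFactor ks θ := by
  simp only [diffFactor, List.map_cons, List.prod_cons]

@[fun_prop]
lemma continuous_diffFactor (ks : List ℝ) : Continuous (diffFactor ks) := by
  induction ks with
  | nil => exact continuous_const
  | cons k ks ih =>
    simp only [funext (diffFactor_cons k ks)]
    fun_prop

lemma fourierChar_re (θ : ℝ) : (𝐞 θ : ℂ).re = Real.cos (2 * Real.pi * θ) := by
  rw [Real.fourierChar_apply, Complex.exp_ofReal_mul_I_re]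

lemma diffFactor_one_re (θ : ℝ) :
    (diffFactor [1] θ).re = 1 * (1 - Real.cos (2 * Real.pi * θ)) := by
  simp only [diffFactor, List.map_cons, List.map_nil, List.prod_cons, List.prod_nil, one_mul,
    mul_one, Complex.sub_re, Complex.one_re, fourierChar_re]

lemma diffFactor_one_neg_one_re (θ : ℝ) :
    (diffFactor [1, -1] θ).re = 2 * (1 - Real.cos (2 * Real.pi * θ)) := by
  have h_norm := Complex.normSq_apply (𝐞 θ : ℂ)
  rw [Complex.normSq_eq_norm_sq, Circle.norm_coe] at h_norm
  have h_neg : (𝐞 (-θ) : ℂ) = (starRingEnd ℂ) (𝐞 θ : ℂ) := by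
    rw [AddChar.map_neg_eq_inv, Circle.coe_inv_eq_conj]
  simp only [diffFactor, List.map_cons, List.map_nil, List.prod_cons, List.prod_nil, one_mul,
    neg_mul, mul_one, h_neg, Complex.mul_re, Complex.sub_re, Complex.sub_im, Complex.conj_re,
    Complex.conj_im, Complex.one_re, Complex.one_im, ← fourierChar_re]
  linarith

lemma norm_one_sub_fourierChar_le (θ : ℝ) : ‖1 - (𝐞 θ : ℂ)‖ ≤ 2 * Real.pi * |θ| := by
  rw [norm_sub_rev, Real.fourierChar_apply, mul_comm]
  refine Real.norm_exp_I_mul_ofReal_sub_one_le.trans ?_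
  rw [Real.norm_eq_abs, abs_mul, abs_of_pos Real.two_pi_pos]

lemma norm_one_sub_fourierChar_le_two (θ : ℝ) : ‖1 - (𝐞 θ : ℂ)‖ ≤ 2 := by
  refine (norm_sub_le _ _).trans ?_
  rw [Circle.norm_coe]
  norm_num

variable {V : Type*} [NormedAddCommGroup V] [InnerProductSpace ℝ V]

lemma iterDiff_fourierChar (ks : List ℝ) (ξ : V) (c : ℂ) (x y : V) :
    iterDiff ks (fun x' => (𝐞 ⟪ξ, x'⟫ : ℂ) * c) x y =
      diffFactor ks ⟪ξ, y⟫ * ((𝐞 ⟪ξ, x⟫ : ℂ) * c) := by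
  induction ks generalizing x with
  | nil => exact (one_mul _).symm
  | cons k ks ih =>
    rw [iterDiff, ih, ih, diffFactor_cons, inner_add_right, real_inner_smul_right,
      AddChar.map_add_eq_mul, Circle.coe_mul]
    ring

lemma norm_one_sub_fourierChar_inner_le (k : ℝ) (ξ y : V) :
    ‖1 - (𝐞 (k * ⟪ξ, y⟫) : ℂ)‖ ≤ 2 * Real.pi * (1 + |k|) * ((1 + ‖ξ‖) * min 1 ‖y‖) := by
  have hpi := Real.pi_gt_three
  have hk := abs_nonneg k
  have hξ := norm_nonneg ξ
  rcases le_total 1 ‖y‖ with h | h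
  · rw [min_eq_left h]
    calc ‖1 - (𝐞 (k * ⟪ξ, y⟫) : ℂ)‖ ≤ 2 * 1 * (1 + 0) * ((1 + 0) * 1) :=
          (norm_one_sub_fourierChar_le_two _).trans (by norm_num)
      _ ≤ _ := by gcongr; linarith
  · rw [min_eq_right h]
    calc ‖1 - (𝐞 (k * ⟪ξ, y⟫) : ℂ)‖ ≤ 2 * Real.pi * (|k| * (‖ξ‖ * ‖y‖)) := by
          refine (norm_one_sub_fourierChar_le _).trans ?_
          rw [abs_mul]
          gcongr
          exact abs_real_inner_le_norm ξ y
      _ ≤ 2 * Real.pi * ((1 + |k|) * ((1 + ‖ξ‖) * ‖y‖)) := by gcongr <;> linarith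
      _ = _ := by ring

lemma exists_norm_diffFactor_inner_le (ks : List ℝ) : ∃ C : ℝ, ∀ ξ y : V,
    ‖diffFactor ks ⟪ξ, y⟫‖ ≤ min 1 ‖y‖ ^ ks.length * (C * (1 + ‖ξ‖) ^ ks.length) := by
  induction ks with
  | nil => exact ⟨1, fun ξ y => by simp [diffFactor]⟩
  | cons k ks ih =>
    obtain ⟨C, hC⟩ := ih
    refine ⟨2 * Real.pi * (1 + |k|) * C, fun ξ y => ?_⟩
    rw [diffFactor_cons, norm_mul]
    refine (mul_le_mul (norm_one_sub_fourierChar_inner_le k ξ y) (hC ξ y) (norm_nonneg _)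
      (by positivity)).trans_eq ?_
    rw [List.length_cons]
    ring

end Characters

/-- A translation-invariant operator `f ↦ ∫ weight y • iterDiff steps f · y dy`, where the weight
is only as singular at the origin as the differences of smooth functions allow. The right Marchaud
derivative and the fractional Laplacian are of this form. -/
structure DifferenceOperator (V : Type*) [NormedAddCommGroup V] [InnerProductSpace ℝ V]
    [FiniteDimensional ℝ V] [MeasurableSpace V] [BorelSpace V] where
  steps : List ℝ
  steps_ne_nil : steps ≠ []
  weight : V → ℝ
  weight_nonneg : ∀ y, 0 ≤ weight y
  measurable_weight : Measurable weight
  integrable_weight : Integrable fun y => min 1 ‖y‖ ^ steps.length * weight y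

namespace DifferenceOperator

variable {V : Type*} [NormedAddCommGroup V] [InnerProductSpace ℝ V] [FiniteDimensional ℝ V]
  [MeasurableSpace V] [BorelSpace V] (D : DifferenceOperator V)

/-- The value at `x` of the operator on a function `f`. -/
noncomputable def apply {E : Type*} [NormedAddCommGroup E] [NormedSpace ℝ E] (f : V → E)
    (x : V) : E :=
  ∫ y, D.weight y • iterDiff D.steps f x y

/-- The Fourier multiplier of the operator. -/
noncomputable def symbol (ξ : V) : ℂ := ∫ y, D.weight y • diffFactor D.steps ⟪ξ, y⟫

section Symbol

lemma integrable_symbol (ξ : V) :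
    Integrable fun y => D.weight y • diffFactor D.steps ⟪ξ, y⟫ := by
  obtain ⟨C, hC⟩ := exists_norm_diffFactor_inner_le (V := V) D.steps
  have := D.measurable_weight
  refine (D.integrable_weight.mul_const (C * (1 + ‖ξ‖) ^ D.steps.length)).mono'
    (Measurable.aestronglyMeasurable (by fun_prop)) (.of_forall fun y => ?_)
  rw [norm_smul, Real.norm_of_nonneg (D.weight_nonneg y), mul_comm (_ ^ _), mul_assoc]
  exact mul_le_mul_of_nonneg_left (hC ξ y) (D.weight_nonneg y)

lemma symbol_smul {β : ℝ}
    (hD : ∀ r > 0, ∀ y, r ^ (Module.finrank ℝ V + β) * D.weight (r • y) = D.weight y)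
    {r : ℝ} (hr : 0 < r) (ξ : V) : D.symbol (r • ξ) = (r ^ β : ℝ) * D.symbol ξ := by
  have h_scale : ∀ y, D.weight y • diffFactor D.steps ⟪r • ξ, y⟫ =
      (r ^ (Module.finrank ℝ V + β) : ℝ) •
        (fun z => D.weight z • diffFactor D.steps ⟪ξ, z⟫) (r • y) := fun y => by
    simp only
    rw [smul_smul, hD r hr, real_inner_smul_left, real_inner_smul_right]
  rw [symbol, symbol, integral_congr_ae (.of_forall h_scale), integral_smul,
    Measure.integral_comp_smul volume (fun z => D.weight z • diffFactor D.steps ⟪ξ, z⟫), smul_smul,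
    Complex.real_smul, abs_of_pos (by positivity), Real.rpow_add hr, Real.rpow_natCast,
    mul_right_comm, mul_inv_cancel₀ (by positivity), one_mul]

lemma symbol_re_pos {c : ℝ} (hc : 0 < c)
    (hre : ∀ θ, (diffFactor D.steps θ).re = c * (1 - Real.cos (2 * Real.pi * θ)))
    {ξ y₀ : V} (hy₀ : Real.cos (2 * Real.pi * ⟪ξ, y₀⟫) < 1)
    (hw : ∀ᶠ y in nhds y₀, 0 < D.weight y) : 0 < (D.symbol ξ).re := by
  have h_re : ∀ y, (D.weight y • diffFactor D.steps ⟪ξ, y⟫).re =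
      D.weight y * (c * (1 - Real.cos (2 * Real.pi * ⟪ξ, y⟫))) := fun y => by
    rw [Complex.smul_re, hre, smul_eq_mul]
  have h_cos : ∀ᶠ y in nhds y₀, Real.cos (2 * Real.pi * ⟪ξ, y⟫) < 1 :=
    ContinuousAt.eventually_lt (by fun_prop) continuousAt_const hy₀
  have h_int := (D.integrable_symbol ξ).re
  have h_symbol := integral_re (D.integrable_symbol ξ)
  simp only [RCLike.re_to_complex, h_re] at h_int h_symbol
  rw [symbol, ← h_symbol]
  rw [integral_pos_iff_support_of_nonneg (fun y => ?_) h_int]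
  · refine Measure.measure_pos_of_mem_nhds volume (x := y₀) ?_
    filter_upwards [hw, h_cos] with y h1 h2
    exact (mul_pos h1 (mul_pos hc (sub_pos.2 h2))).ne'
  · exact mul_nonneg (D.weight_nonneg y)
      (mul_nonneg hc.le (sub_nonneg.2 (Real.cos_le_one _)))

lemma symbol_contDiffAt {β : ℝ}
    (hD : ∀ r > 0, ∀ y, r ^ (Module.finrank ℝ V + β) * D.weight (r • y) = D.weight y)
    {ξ : V} (hξ : ξ ≠ 0)
    (hloc : ∀ᶠ ζ in nhds ξ, D.symbol (‖ζ‖⁻¹ • ζ) = D.symbol (‖ξ‖⁻¹ • ξ)) :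
    ContDiffAt ℝ ∞ D.symbol ξ := by
  have h_smooth : ContDiffAt ℝ ∞
      (fun ζ : V => ((‖ζ‖ ^ β : ℝ) : ℂ) * D.symbol (‖ξ‖⁻¹ • ξ)) ξ :=
    (Complex.ofRealCLM.contDiff.contDiffAt.comp ξ
      ((contDiffAt_norm ℝ hξ).rpow_const_of_ne (norm_ne_zero_iff.2 hξ))).mul contDiffAt_const
  refine h_smooth.congr_of_eventuallyEq ?_
  filter_upwards [hloc, isOpen_compl_singleton.mem_nhds hξ] with ζ hζ hζ0
  have h_norm := norm_pos_iff.2 hζ0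
  rw [← hζ, ← D.symbol_smul hD h_norm, smul_inv_smul₀ h_norm.ne']

end Symbol

section Superposition

variable {Z : Type*} [MeasurableSpace Z] {μ : Measure Z} {ξ : Z → V} {Ψ : Z → ℂ}

lemma integrable_prod_weight_smul_diffFactor (hξ : Measurable ξ)
    (hΨ : AEStronglyMeasurable Ψ μ)
    (hΨξ : Integrable (fun z => (1 + ‖ξ z‖) ^ D.steps.length * ‖Ψ z‖) μ) (x : V) :
    Integrable (Function.uncurry fun y z => (D.weight y • diffFactor D.steps ⟪ξ z, y⟫) *
      ((𝐞 ⟪ξ z, x⟫ : ℂ) * Ψ z)) (volume.prod μ) := by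
  obtain ⟨C, hC⟩ := exists_norm_diffFactor_inner_le (V := V) D.steps
  have := D.measurable_weight
  have h_meas : Measurable fun z => (𝐞 ⟪ξ z, x⟫ : ℂ) :=
    (by fun_prop : Continuous fun η : V => (𝐞 ⟪η, x⟫ : ℂ)).measurable.comp hξ
  refine (D.integrable_weight.mul_prod (hΨξ.const_mul C)).mono'
    ((Measurable.aestronglyMeasurable (by fun_prop)).mul
      (h_meas.aestronglyMeasurable.mul hΨ).comp_snd) (.of_forall fun p => ?_)
  rw [Function.uncurry, norm_mul, norm_mul, norm_smul, Circle.norm_coe, one_mul,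
    Real.norm_of_nonneg (D.weight_nonneg _)]
  calc D.weight p.1 * ‖diffFactor D.steps ⟪ξ p.2, p.1⟫‖ * ‖Ψ p.2‖
      ≤ D.weight p.1 * (min 1 ‖p.1‖ ^ D.steps.length *
          (C * (1 + ‖ξ p.2‖) ^ D.steps.length)) * ‖Ψ p.2‖ := by
        have := D.weight_nonneg p.1
        gcongr
        exact hC _ _
    _ = _ := by ring

lemma weight_smul_iterDiff_superposition (hξ : Measurable ξ) (hΨ : Integrable Ψ μ) (x y : V) :
    D.weight y • iterDiff D.steps (fun x' => ∫ z, (𝐞 ⟪ξ z, x'⟫ : ℂ) * Ψ z ∂μ) x y =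
      ∫ z, (D.weight y • diffFactor D.steps ⟪ξ z, y⟫) * ((𝐞 ⟪ξ z, x⟫ : ℂ) * Ψ z) ∂μ := by
  have h_meas : ∀ x', Measurable fun z => (𝐞 ⟪ξ z, x'⟫ : ℂ) := fun x' =>
    (by fun_prop : Continuous fun η : V => (𝐞 ⟪η, x'⟫ : ℂ)).measurable.comp hξ
  have h_int : ∀ x', Integrable (fun z => (𝐞 ⟪ξ z, x'⟫ : ℂ) * Ψ z) μ := fun x' =>
    hΨ.bdd_mul (c := 1) (h_meas x').aestronglyMeasurable
      (.of_forall fun z => (Circle.norm_coe _).le)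
  rw [iterDiff_integral h_int, ← integral_smul]
  simp only [iterDiff_fourierChar, smul_mul_assoc]

variable [SFinite μ]

lemma integrable_weight_smul_iterDiff_superposition (hξ : Measurable ξ) (hΨ : Integrable Ψ μ)
    (hΨξ : Integrable (fun z => (1 + ‖ξ z‖) ^ D.steps.length * ‖Ψ z‖) μ) (x : V) :
    Integrable fun y =>
      D.weight y • iterDiff D.steps (fun x' => ∫ z, (𝐞 ⟪ξ z, x'⟫ : ℂ) * Ψ z ∂μ) x y := by
  simp only [D.weight_smul_iterDiff_superposition hξ hΨ]
  exact (D.integrable_prod_weight_smul_diffFactor hξ hΨ.1 hΨξ x).integral_prod_left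

lemma integrable_symbol_mul_superposition (hξ : Measurable ξ) (hΨ : AEStronglyMeasurable Ψ μ)
    (hΨξ : Integrable (fun z => (1 + ‖ξ z‖) ^ D.steps.length * ‖Ψ z‖) μ) (x : V) :
    Integrable (fun z => (𝐞 ⟪ξ z, x⟫ : ℂ) * (D.symbol (ξ z) * Ψ z)) μ := by
  have h := (D.integrable_prod_weight_smul_diffFactor hξ hΨ hΨξ x).integral_prod_right
  simpa only [Function.uncurry, integral_mul_const, symbol, mul_left_comm (𝐞 _ : ℂ)] using h

lemma apply_superposition (hξ : Measurable ξ) (hΨ : Integrable Ψ μ)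
    (hΨξ : Integrable (fun z => (1 + ‖ξ z‖) ^ D.steps.length * ‖Ψ z‖) μ) (x : V) :
    D.apply (fun x' => ∫ z, (𝐞 ⟪ξ z, x'⟫ : ℂ) * Ψ z ∂μ) x =
      ∫ z, (𝐞 ⟪ξ z, x⟫ : ℂ) * (D.symbol (ξ z) * Ψ z) ∂μ := by
  have h_swap := integral_integral_swap
    (D.integrable_prod_weight_smul_diffFactor hξ hΨ.1 hΨξ x)
  simp only [apply, D.weight_smul_iterDiff_superposition hξ hΨ]
  simpa only [integral_mul_const, symbol, mul_left_comm (𝐞 _ : ℂ)] using h_swap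

end Superposition

end DifferenceOperator

section MeanZero

open scoped LineDeriv

lemma lintegral_enorm_sub_translate_le_two_mul {V E : Type*} [NormedAddCommGroup V]
    [MeasurableSpace V] [BorelSpace V] {μ : Measure V} [μ.IsAddRightInvariant]
    [NormedAddCommGroup E] {f : V → E} (hf : Continuous f) (v : V) :
    ∫⁻ x, ‖f x - f (x + v)‖ₑ ∂μ ≤ 2 * ∫⁻ x, ‖f x‖ₑ ∂μ := by
  calc ∫⁻ x, ‖f x - f (x + v)‖ₑ ∂μ ≤ ∫⁻ x, ‖f x‖ₑ + ‖f (x + v)‖ₑ ∂μ :=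
        lintegral_mono fun x => enorm_sub_le
    _ = 2 * ∫⁻ x, ‖f x‖ₑ ∂μ := by
        rw [lintegral_add_left hf.enorm.measurable, lintegral_add_right_eq_self fun x => ‖f x‖ₑ,
          two_mul]

variable {V E : Type*} [NormedAddCommGroup V] [NormedSpace ℝ V] [NormedAddCommGroup E]
  [NormedSpace ℝ E]

lemma contDiff_iterDiff {n : WithTop ℕ∞} {f : V → E} (hf : ContDiff ℝ n f) (ks : List ℝ) (y : V) :
    ContDiff ℝ n fun x => iterDiff ks f x y := by
  induction ks with
  | nil => exact hf
  | cons k ks ih => exact ih.sub (ih.comp (contDiff_id.add contDiff_const))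

lemma fderiv_iterDiff_apply {f : V → E} (hf : ContDiff ℝ 1 f) (ks : List ℝ) (x y v : V) :
    fderiv ℝ (fun x' => iterDiff ks f x' y) x v = iterDiff ks (fun x' => fderiv ℝ f x' v) x y := by
  induction ks generalizing x with
  | nil => rfl
  | cons k ks ih =>
    have h_diff : Differentiable ℝ fun x' => iterDiff ks f x' y :=
      (contDiff_iterDiff hf ks y).differentiable one_ne_zero
    have h_shift : DifferentiableAt ℝ (fun x' => iterDiff ks f (x' + k • y) y) x :=
      (h_diff _).comp x (by fun_prop)
    simp only [iterDiff]
    rw [fderiv_fun_sub (h_diff x) h_shift, sub_apply, ih,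
      fderiv_comp_add_right (f := fun x' => iterDiff ks f x' y), ih]

variable [MeasurableSpace V] [BorelSpace V] {μ : Measure V} [μ.IsAddRightInvariant]

lemma integral_iterDiff_eq_zero {f : V → E} (hf : Integrable f μ) {ks : List ℝ} (hks : ks ≠ [])
    (y : V) : ∫ x, iterDiff ks f x y ∂μ = 0 := by
  have h_int : ∀ ls : List ℝ, Integrable (fun x => iterDiff ls f x y) μ := fun ls => by
    induction ls with
    | nil => exact hf
    | cons k ls ih => exact ih.sub (ih.comp_add_right (k • y))
  obtain ⟨k, ls, rfl⟩ := List.exists_cons_of_ne_nil hks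
  simp only [iterDiff]
  rw [integral_sub (h_int ls) ((h_int ls).comp_add_right (k • y)),
    integral_add_right_eq_self fun x => iterDiff ls f x y, sub_self]

lemma lintegral_enorm_iterDiff_le_two_pow_mul {E : Type*} [NormedAddCommGroup E] {f : V → E}
    (hf : Continuous f) (ks : List ℝ) (y : V) :
    ∫⁻ x, ‖iterDiff ks f x y‖ₑ ∂μ ≤ 2 ^ ks.length * ∫⁻ x, ‖f x‖ₑ ∂μ := by
  induction ks with
  | nil => simp [iterDiff]
  | cons k ks ih =>
    have h_cont : Continuous fun x => iterDiff ks f x y :=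
      (continuous_uncurry_iterDiff hf ks).comp (Continuous.prodMk_left y)
    calc ∫⁻ x, ‖iterDiff (k :: ks) f x y‖ₑ ∂μ ≤ 2 * ∫⁻ x, ‖iterDiff ks f x y‖ₑ ∂μ :=
          lintegral_enorm_sub_translate_le_two_mul h_cont (k • y)
      _ ≤ 2 * (2 ^ ks.length * ∫⁻ x, ‖f x‖ₑ ∂μ) := by gcongr
      _ = _ := by rw [List.length_cons, pow_succ', mul_assoc]

variable [CompleteSpace E] [SFinite μ]

lemma lintegral_enorm_sub_translate_le {f : V → E} (hf : ContDiff ℝ 1 f) (v : V) :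
    ∫⁻ x, ‖f x - f (x + v)‖ₑ ∂μ ≤ ∫⁻ x, ‖fderiv ℝ f x v‖ₑ ∂μ := by
  have h_cont : Continuous fun x => fderiv ℝ f x v :=
    (hf.continuous_fderiv one_ne_zero).clm_apply continuous_const
  have h_bound : ∀ x, ‖f x - f (x + v)‖ₑ ≤
      ∫⁻ θ : ℝ in Ioc 0 1, ‖fderiv ℝ f (x + θ • v) v‖ₑ := by
    intro x
    have h_ftc : ∫ θ in (0 : ℝ)..1, fderiv ℝ f (x + θ • v) v = f (x + v) - f x := by
      have h_deriv : ∀ θ ∈ uIcc (0 : ℝ) 1,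
          HasDerivAt (fun θ : ℝ => f (x + θ • v)) (fderiv ℝ f (x + θ • v) v) θ := fun θ _ => by
        refine (hf.differentiable one_ne_zero _).hasFDerivAt.comp_hasDerivAt θ ?_
        simpa using ((hasDerivAt_id θ).smul_const v).const_add x
      have h_ii : IntervalIntegrable (fun θ : ℝ => fderiv ℝ f (x + θ • v) v) volume 0 1 :=
        (h_cont.comp (by fun_prop : Continuous fun θ : ℝ => x + θ • v)).intervalIntegrable 0 1
      simpa using intervalIntegral.integral_eq_sub_of_hasDerivAt h_deriv h_ii
    rw [enorm_sub_rev, ← h_ftc, intervalIntegral.integral_of_le zero_le_one]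
    exact enorm_integral_le_lintegral_enorm _
  calc ∫⁻ x, ‖f x - f (x + v)‖ₑ ∂μ
      ≤ ∫⁻ x, (∫⁻ θ : ℝ in Ioc 0 1, ‖fderiv ℝ f (x + θ • v) v‖ₑ) ∂μ := lintegral_mono h_bound
    _ = ∫⁻ θ : ℝ in Ioc 0 1, ∫⁻ x, ‖fderiv ℝ f (x + θ • v) v‖ₑ ∂μ :=
        lintegral_lintegral_swap (h_cont.comp
          (by fun_prop : Continuous fun p : V × ℝ => p.1 + p.2 • v)).enorm.measurable.aemeasurable
    _ = ∫⁻ x, ‖fderiv ℝ f x v‖ₑ ∂μ := by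
        simp_rw [lintegral_add_right_eq_self fun x => ‖fderiv ℝ f x v‖ₑ]
        simp

lemma lintegral_enorm_iterDiff_le (ks : List ℝ) (f : SchwartzMap V E) (y : V) :
    ∫⁻ x, ‖iterDiff ks f x y‖ₑ ∂μ ≤
      ‖ks.prod‖ₑ * ∫⁻ x, ‖((∂_{y})^[ks.length] f : SchwartzMap V E) x‖ₑ ∂μ := by
  induction ks generalizing f with
  | nil => simp [iterDiff]
  | cons k ks ih =>
    have h_smooth : ContDiff ℝ 1 fun x => iterDiff ks f x y := contDiff_iterDiff (f.smooth 1) ks y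
    calc ∫⁻ x, ‖iterDiff (k :: ks) f x y‖ₑ ∂μ
        ≤ ∫⁻ x, ‖fderiv ℝ (fun x' => iterDiff ks f x' y) x (k • y)‖ₑ ∂μ :=
          lintegral_enorm_sub_translate_le h_smooth (k • y)
      _ = ‖k‖ₑ * ∫⁻ x, ‖iterDiff ks (∂_{y} f : SchwartzMap V E) x y‖ₑ ∂μ := by
          rw [← lintegral_const_mul' _ _ enorm_ne_top]
          refine lintegral_congr fun x => ?_
          rw [map_smul, enorm_smul, fderiv_iterDiff_apply (f.smooth 1)]
          rfl
      _ ≤ ‖k‖ₑ * (‖ks.prod‖ₑ *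
            ∫⁻ x, ‖((∂_{y})^[ks.length] (∂_{y} f) : SchwartzMap V E) x‖ₑ ∂μ) := by
          gcongr
          exact ih (∂_{y} f)
      _ = _ := by
          rw [List.prod_cons, enorm_mul, List.length_cons, Function.iterate_succ_apply, mul_assoc]

lemma exists_lintegral_enorm_iterDiff_le [SecondCountableTopology V] [μ.HasTemperateGrowth]
    (f : SchwartzMap V E) (ks : List ℝ) : ∃ C : ENNReal, C ≠ ⊤ ∧
    ∀ y, ∫⁻ x, ‖iterDiff ks f x y‖ₑ ∂μ ≤ C * ENNReal.ofReal (min 1 ‖y‖ ^ ks.length) := by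
  set m := ks.length
  have h_deriv : ∀ y, ∫⁻ x, ‖((∂_{y})^[m] f : SchwartzMap V E) x‖ₑ ∂μ ≤
      (∫⁻ x, ‖iteratedFDeriv ℝ m f x‖ₑ ∂μ) * ENNReal.ofReal (‖y‖ ^ m) := fun y => by
    rw [← lintegral_mul_const' _ _ ENNReal.ofReal_ne_top]
    refine lintegral_mono fun x => ?_
    have h_iter : (∂_{y})^[m] f = ∂^{fun _ : Fin m => y} f :=
      (LineDeriv.iteratedLineDerivOp_const_eq_iter_lineDerivOp (V := V) m y f).symm
    rw [h_iter, SchwartzMap.iteratedLineDerivOp_eq_iteratedFDeriv, ← ofReal_norm, ← ofReal_norm,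
      ← ENNReal.ofReal_mul (norm_nonneg _)]
    refine ENNReal.ofReal_le_ofReal ?_
    simpa using (iteratedFDeriv ℝ m f x).le_opNorm fun _ => y
  have h_finite : ∫⁻ x, ‖iteratedFDeriv ℝ m f x‖ₑ ∂μ ≠ ⊤ := by
    have h_int := f.integrable_pow_mul_iteratedFDeriv μ 0 m
    simp only [pow_zero, one_mul] at h_int
    simpa [HasFiniteIntegral] using h_int.2.ne
  refine ⟨2 ^ m * (∫⁻ x, ‖f x‖ₑ ∂μ) +
    ‖ks.prod‖ₑ * ∫⁻ x, ‖iteratedFDeriv ℝ m f x‖ₑ ∂μ, ?_, fun y => ?_⟩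
  · refine ENNReal.add_ne_top.2 ⟨ENNReal.mul_ne_top (by simp) f.integrable.2.ne,
      ENNReal.mul_ne_top enorm_ne_top h_finite⟩
  · rcases le_total 1 ‖y‖ with h | h
    · rw [min_eq_left h, one_pow, ENNReal.ofReal_one, mul_one]
      exact (lintegral_enorm_iterDiff_le_two_pow_mul f.continuous ks y).trans le_self_add
    · rw [min_eq_right h, add_mul]
      refine (lintegral_enorm_iterDiff_le ks f y).trans (le_add_left ?_)
      rw [mul_assoc]
      gcongr
      exact h_deriv y

end MeanZero

namespace DifferenceOperator

variable {V E : Type*} [NormedAddCommGroup V] [InnerProductSpace ℝ V] [FiniteDimensional ℝ V]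
  [MeasurableSpace V] [BorelSpace V] [NormedAddCommGroup E] [NormedSpace ℝ E] [CompleteSpace E]
  (D : DifferenceOperator V)

lemma integrable_prod_weight_smul_iterDiff (f : SchwartzMap V E) :
    Integrable (Function.uncurry fun y x => D.weight y • iterDiff D.steps f x y)
      (volume.prod volume) := by
  have h_meas : AEStronglyMeasurable
      (Function.uncurry fun y x => D.weight y • iterDiff D.steps f x y) (volume.prod volume) :=
    (D.measurable_weight.comp measurable_fst).aestronglyMeasurable.smul
      ((continuous_uncurry_iterDiff f.continuous D.steps).comp
        continuous_swap).aestronglyMeasurable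
  refine ⟨h_meas, ?_⟩
  obtain ⟨C, hC, h_bound⟩ := exists_lintegral_enorm_iterDiff_le (μ := volume) f D.steps
  rw [hasFiniteIntegral_iff_enorm, lintegral_prod _ h_meas.enorm]
  calc ∫⁻ y, ∫⁻ x, ‖D.weight y • iterDiff D.steps f x y‖ₑ
      ≤ ∫⁻ y, C * ‖min 1 ‖y‖ ^ D.steps.length * D.weight y‖ₑ := by
        refine lintegral_mono fun y => ?_
        simp_rw [enorm_smul]
        rw [lintegral_const_mul' _ _ enorm_ne_top, enorm_mul, mul_comm ‖D.weight y‖ₑ, ← mul_assoc,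
          Real.enorm_of_nonneg (r := min 1 ‖y‖ ^ D.steps.length) (by positivity)]
        gcongr
        exact h_bound y
    _ = C * ∫⁻ y, ‖min 1 ‖y‖ ^ D.steps.length * D.weight y‖ₑ := lintegral_const_mul' _ _ hC
    _ < ⊤ := ENNReal.mul_lt_top hC.lt_top D.integrable_weight.2

lemma integrable_apply (f : SchwartzMap V E) : Integrable (D.apply f) :=
  (D.integrable_prod_weight_smul_iterDiff f).integral_prod_right

lemma integral_apply_eq_zero (f : SchwartzMap V E) : ∫ x, D.apply f x = 0 := by
  simp only [apply]
  rw [← integral_integral_swap (D.integrable_prod_weight_smul_iterDiff f)]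
  simp only [integral_smul, integral_iterDiff_eq_zero f.integrable D.steps_ne_nil, smul_zero,
    integral_zero]

end DifferenceOperator

section HomogeneousOperators

lemma integrableOn_min_one_pow_mul_rpow_inv {k : ℕ} {β : ℝ} (hβ : 0 < β) (hβk : β < k) :
    IntegrableOn (fun r : ℝ => min 1 r ^ k * (r ^ (1 + β))⁻¹) (Ioi 0) := by
  rw [← Ioc_union_Ioi_eq_Ioi (zero_le_one' ℝ)]
  refine IntegrableOn.union ?_ ?_
  · have h_near : IntegrableOn (fun r : ℝ => r ^ ((k : ℝ) - (1 + β))) (Ioc 0 1) := by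
      rw [← intervalIntegrable_iff_integrableOn_Ioc_of_le zero_le_one]
      exact intervalIntegral.intervalIntegrable_rpow' (by linarith)
    refine h_near.congr_fun (fun r hr => ?_) measurableSet_Ioc
    simp only
    rw [min_eq_right hr.2, Real.rpow_sub hr.1, Real.rpow_natCast, div_eq_mul_inv]
  · have h_far := integrableOn_Ioi_rpow_of_lt (a := -(1 + β)) (by linarith) one_pos
    refine h_far.congr_fun (fun r hr => ?_) measurableSet_Ioi
    have hr1 : (1 : ℝ) < r := hr
    simp only
    rw [min_eq_left hr1.le, one_pow, one_mul, Real.rpow_neg (by linarith)]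

variable {V : Type*} [NormedAddCommGroup V] [InnerProductSpace ℝ V] [FiniteDimensional ℝ V]
  [MeasurableSpace V] [BorelSpace V] [Nontrivial V]

lemma integrable_min_one_norm_pow_mul_rpow_inv {k : ℕ} {β : ℝ} (hβ : 0 < β) (hβk : β < k) :
    Integrable fun y : V => min 1 ‖y‖ ^ k * (‖y‖ ^ (Module.finrank ℝ V + β))⁻¹ := by
  refine (integrable_fun_norm_addHaar (volume : Measure V)
    (f := fun r : ℝ => min 1 r ^ k * (r ^ (Module.finrank ℝ V + β))⁻¹)).2 ?_
  refine (integrableOn_min_one_pow_mul_rpow_inv hβ hβk).congr_fun (fun r hr => ?_) measurableSet_Ioi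
  have hr0 : (0 : ℝ) < r := hr
  have h_rpow : r ^ (Module.finrank ℝ V + β) = r ^ (Module.finrank ℝ V - 1) * r ^ (1 + β) := by
    rw [← Real.rpow_natCast, ← Real.rpow_add hr0, Nat.cast_sub Module.finrank_pos]
    congr 1
    push_cast
    ring
  simp only [smul_eq_mul]
  rw [h_rpow]
  field_simp

namespace DifferenceOperator

/-- The difference operator whose weight is homogeneous of degree `-(dim V + β)` on a set `S`,
which is a cone in all uses. -/
noncomputable def homogeneous {ks : List ℝ} (hks : ks ≠ []) {β : ℝ} (hβ : 0 < β)
    (hβk : β < ks.length) {c : ℝ} (hc : 0 ≤ c) {S : Set V} (hS : MeasurableSet S) :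
    DifferenceOperator V where
  steps := ks
  steps_ne_nil := hks
  weight := S.indicator fun y => c * (‖y‖ ^ (Module.finrank ℝ V + β))⁻¹
  weight_nonneg y := indicator_nonneg (fun _ _ => by positivity) y
  measurable_weight := Measurable.indicator (by fun_prop) hS
  integrable_weight := by
    refine (((integrable_min_one_norm_pow_mul_rpow_inv hβ hβk).const_mul c).indicator hS).congr
      (.of_forall fun y => ?_)
    by_cases hy : y ∈ S <;> simp [hy, mul_left_comm]

/-- The symbol is smooth with positive real part off the origin. -/
structure IsElliptic {V : Type*} [NormedAddCommGroup V] [InnerProductSpace ℝ V]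
    [FiniteDimensional ℝ V] [MeasurableSpace V] [BorelSpace V] (D : DifferenceOperator V) :
    Prop where
  contDiffAt : ∀ ξ ≠ 0, ContDiffAt ℝ ∞ D.symbol ξ
  re_pos : ∀ ξ ≠ 0, 0 < (D.symbol ξ).re

variable {ks : List ℝ} {hks : ks ≠ []} {β : ℝ} {hβ : 0 < β} {hβk : β < ks.length} {c : ℝ}
  {S : Set V} {hS : MeasurableSet S}

lemma homogeneous_weight_smul {hc : 0 ≤ c} (hcone : ∀ r > (0 : ℝ), ∀ y, r • y ∈ S ↔ y ∈ S) (r : ℝ)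
    (hr : r > 0) (y : V) :
    r ^ (Module.finrank ℝ V + β) * (homogeneous hks hβ hβk hc hS).weight (r • y) =
      (homogeneous hks hβ hβk hc hS).weight y := by
  by_cases hy : y ∈ S
  · have := (Real.rpow_pos_of_pos hr (Module.finrank ℝ V + β)).ne'
    simp only [homogeneous, indicator_of_mem hy, indicator_of_mem ((hcone r hr y).2 hy)]
    rw [norm_smul, Real.norm_of_nonneg hr.le, Real.mul_rpow hr.le (norm_nonneg y)]
    field_simp
  · simp only [homogeneous, indicator_of_notMem hy,
      indicator_of_notMem (mt (hcone r hr y).1 hy), mul_zero]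

lemma isElliptic_homogeneous (hc : 0 < c) (hcone : ∀ r > (0 : ℝ), ∀ y, r • y ∈ S ↔ y ∈ S) {a : ℝ}
    (ha : 0 < a) (hre : ∀ θ, (diffFactor ks θ).re = a * (1 - Real.cos (2 * Real.pi * θ)))
    (hS_phase : ∀ ξ : V, ξ ≠ 0 → ∃ y ∈ interior S, |⟪ξ, y⟫| = 1 / 2)
    (hloc : ∀ ξ : V, ξ ≠ 0 → ∀ᶠ ζ in nhds ξ,
      (homogeneous hks hβ hβk hc.le hS).symbol (‖ζ‖⁻¹ • ζ) =
        (homogeneous hks hβ hβk hc.le hS).symbol (‖ξ‖⁻¹ • ξ)) :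
    (homogeneous hks hβ hβk hc.le hS).IsElliptic where
  contDiffAt ξ hξ := symbol_contDiffAt _ (homogeneous_weight_smul hcone) hξ (hloc ξ hξ)
  re_pos ξ hξ := by
    obtain ⟨y₀, hy₀S, hy₀⟩ := hS_phase ξ hξ
    have h_cos : Real.cos (2 * Real.pi * ⟪ξ, y₀⟫) < 1 := by
      rw [← Real.cos_abs, abs_mul, hy₀, abs_of_pos Real.two_pi_pos, mul_assoc, mul_one_div,
        mul_div_cancel₀ _ two_ne_zero, Real.cos_pi]
      norm_num
    have hy₀0 : y₀ ≠ 0 := by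
      rintro rfl
      norm_num at hy₀
    refine symbol_re_pos _ ha hre h_cos ?_
    filter_upwards [isOpen_interior.mem_nhds hy₀S, isOpen_compl_singleton.mem_nhds hy₀0]
      with y hy hy0
    have := norm_pos_iff.2 hy0
    simp only [homogeneous, indicator_of_mem (interior_subset hy)]
    positivity

end DifferenceOperator

end HomogeneousOperators

section Marchaud

lemma abs_Gamma_neg_pos {a : ℝ} (ha0 : 0 < a) (ha1 : a < 1) : 0 < |Real.Gamma (-a)| := by
  refine abs_pos.2 (Real.Gamma_ne_zero fun m h => ?_)
  obtain rfl : a = m := neg_injective h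
  norm_cast at ha0 ha1
  omega

lemma Calpha_pos {α : ℝ} (hα0 : 0 < α) (hα1 : α < 1) : 0 < Calpha α :=
  one_div_pos.2 (abs_Gamma_neg_pos hα0 hα1)

/-- The right Marchaud derivative of order `α` as a difference operator. -/
noncomputable def marchaudOperator {α : ℝ} (hα0 : 0 < α) (hα1 : α < 1) : DifferenceOperator ℝ :=
  .homogeneous (List.cons_ne_nil 1 []) hα0 (by simpa using hα1) (Calpha_pos hα0 hα1).le
    (measurableSet_Ioi (a := 0))

lemma marchaudOperator_apply {n : ℕ} {α : ℝ} (hα0 : 0 < α) (hα1 : α < 1)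
    (φ : EuclideanSpace ℝ (Fin n) × ℝ → ℝ) (x : EuclideanSpace ℝ (Fin n)) (t : ℝ) :
    (marchaudOperator hα0 hα1).apply (fun τ => φ (x, τ)) t = marchaudRight α φ x t := by
  rw [marchaudRight, ← integral_const_mul, ← integral_indicator measurableSet_Ioi,
    ← integral_add_left_eq_self _ t]
  refine integral_congr_ae (.of_forall fun τ => ?_)
  by_cases hτ : 0 < τ
  · have hτt : t + τ ∈ Ioi t := lt_add_of_pos_right t hτ
    simp only [marchaudOperator, DifferenceOperator.homogeneous, indicator_of_mem hτt,
      indicator_of_mem (mem_Ioi.2 hτ), iterDiff_one, Module.finrank_self, Nat.cast_one,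
      Real.norm_of_nonneg hτ.le, add_sub_cancel_left, smul_eq_mul]
    ring
  · have hτt : t + τ ∉ Ioi t := by simpa using hτ
    simp only [marchaudOperator, DifferenceOperator.homogeneous, indicator_of_notMem hτt,
      indicator_of_notMem (notMem_Ioi.2 (not_lt.1 hτ)), zero_smul]

lemma isElliptic_marchaudOperator {α : ℝ} (hα0 : 0 < α) (hα1 : α < 1) :
    (marchaudOperator hα0 hα1).IsElliptic := by
  refine DifferenceOperator.isElliptic_homogeneous (Calpha_pos hα0 hα1)
    (fun r hr y => by simp [hr]) one_pos diffFactor_one_re (fun ξ hξ => ?_) fun ξ hξ => ?_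
  · have := abs_pos.2 hξ
    refine ⟨1 / (2 * |ξ|), by simpa [interior_Ioi] using hξ, ?_⟩
    rw [RCLike.inner_apply, conj_trivial, abs_mul, abs_of_pos (a := 1 / (2 * |ξ|)) (by positivity)]
    field_simp
  · have h_sign : ∀ ζ : ℝ, ζ ≠ 0 → ‖ζ‖⁻¹ • ζ = SignType.sign ζ := fun ζ hζ => by
      rw [Real.norm_eq_abs, smul_eq_mul, inv_mul_eq_div, div_eq_iff (abs_ne_zero.2 hζ),
        sign_mul_abs]
    filter_upwards [(continuousAt_sign_of_ne_zero hξ).eventually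
      (show ∀ᶠ σ in nhds (SignType.sign ξ), σ = SignType.sign ξ by simp),
      isOpen_compl_singleton.mem_nhds hξ] with ζ hζ hζ0
    rw [h_sign ζ hζ0, h_sign ξ hξ, hζ]

end Marchaud

section FractionalLaplacian

variable {n : ℕ} [NeZero n] {s : ℝ}

lemma Cns_pos (n : ℕ) {s : ℝ} (hs0 : 0 < s) (hs1 : s < 1) : 0 < Cns n s := by
  have h_neg := abs_Gamma_neg_pos hs0 hs1
  have : 0 < Real.Gamma ((n : ℝ) / 2 + s) := Real.Gamma_pos_of_pos (by positivity)
  unfold Cns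
  positivity

/-- The fractional Laplacian of order `s` as a difference operator. -/
noncomputable def fracLapOperator (n : ℕ) [NeZero n] {s : ℝ} (hs0 : 0 < s) (hs1 : s < 1) :
    DifferenceOperator (EuclideanSpace ℝ (Fin n)) :=
  .homogeneous (List.cons_ne_nil 1 [-1]) (β := 2 * s) (by positivity)
    (by simpa using hs1) (half_pos (Cns_pos n hs0 hs1)).le MeasurableSet.univ

lemma fracLapOperator_apply (hs0 : 0 < s) (hs1 : s < 1) (φ : EuclideanSpace ℝ (Fin n) × ℝ → ℝ)
    (x : EuclideanSpace ℝ (Fin n)) (t : ℝ) :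
    (fracLapOperator n hs0 hs1).apply (fun x' => φ (x', t)) x = fracLap s φ x t := by
  rw [fracLap, ← integral_const_mul]
  refine integral_congr_ae (.of_forall fun y => ?_)
  simp only [fracLapOperator, DifferenceOperator.homogeneous, indicator_univ,
    finrank_euclideanSpace, Fintype.card_fin, iterDiff_one_neg_one, smul_eq_mul]
  ring

lemma fracLapOperator_symbol_eq_of_norm_eq (hs0 : 0 < s) (hs1 : s < 1)
    {ξ η : EuclideanSpace ℝ (Fin n)} (h : ‖ξ‖ = ‖η‖) :
    (fracLapOperator n hs0 hs1).symbol ξ = (fracLapOperator n hs0 hs1).symbol η := by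
  set R := (Submodule.span ℝ {η - ξ})ᗮ.reflection
  have hRη : R η = ξ := Submodule.reflection_sub h.symm
  rw [DifferenceOperator.symbol, DifferenceOperator.symbol,
    ← R.measurePreserving.integral_comp' (f := R.toMeasurableEquiv)]
  refine integral_congr_ae (.of_forall fun y => ?_)
  simp [fracLapOperator, DifferenceOperator.homogeneous, ← hRη, R.norm_map, R.inner_map_map]

lemma isElliptic_fracLapOperator (hs0 : 0 < s) (hs1 : s < 1) :
    (fracLapOperator n hs0 hs1).IsElliptic := by
  refine DifferenceOperator.isElliptic_homogeneous (half_pos (Cns_pos n hs0 hs1))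
    (fun _ _ _ => by simp only [mem_univ]) two_pos diffFactor_one_neg_one_re
    (fun ξ hξ => ⟨(2 * ‖ξ‖ ^ 2)⁻¹ • ξ, by simp, ?_⟩) fun ξ hξ => ?_
  · have := norm_pos_iff.2 hξ
    rw [real_inner_smul_right, real_inner_self_eq_norm_sq, abs_of_pos (by positivity)]
    field_simp
  · filter_upwards [isOpen_compl_singleton.mem_nhds hξ] with ζ hζ
    refine fracLapOperator_symbol_eq_of_norm_eq hs0 hs1 ?_
    simp only [norm_smul, norm_inv, norm_norm, inv_mul_cancel₀ (norm_ne_zero_iff.2 hξ),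
      inv_mul_cancel₀ (norm_ne_zero_iff.2 hζ)]

end FractionalLaplacian

section Decay

variable {V : Type*} [NormedAddCommGroup V]

lemma exists_schwartz_norm_le_div {F : Type*} [NormedSpace ℝ V] [NormedAddCommGroup F]
    [NormedSpace ℝ F] (f : SchwartzMap V F) (N : ℕ) :
    ∃ C, 0 ≤ C ∧ ∀ x, ‖f x‖ ≤ C / (1 + ‖x‖) ^ N := by
  refine ⟨2 ^ N * ((Finset.Iic (N, 0)).sup fun m => SchwartzMap.seminorm ℝ m.1 m.2) f,
    by positivity, fun x => ?_⟩
  rw [le_div_iff₀ (by positivity), mul_comm]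
  simpa using SchwartzMap.one_add_le_sup_seminorm_apply (𝕜 := ℝ) (m := (N, 0)) le_rfl le_rfl f x

lemma one_add_norm_le_mul {x p y : V} (h : ‖x - p‖ ≤ ‖y‖) :
    1 + ‖x‖ ≤ (1 + ‖p‖) * (1 + ‖y‖) := by
  have h_tri : ‖x‖ ≤ ‖p‖ + ‖x - p‖ := by simpa using norm_add_le p (x - p)
  nlinarith [norm_nonneg p, norm_nonneg y]

lemma div_one_add_norm_pow_le {C : ℝ} (hC : 0 ≤ C) (N : ℕ) {x p y : V} (h : ‖x - p‖ ≤ ‖y‖) :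
    C / (1 + ‖p‖) ^ N ≤ C * (1 + ‖y‖) ^ N / (1 + ‖x‖) ^ N := by
  rw [div_le_div_iff₀ (by positivity) (by positivity), mul_assoc, ← mul_pow, mul_comm (1 + ‖y‖)]
  gcongr
  exact one_add_norm_le_mul h

lemma exists_schwartz_norm_sub_le {F : Type*} [NormedSpace ℝ V] [NormedAddCommGroup F]
    [NormedSpace ℝ F] (f : SchwartzMap V F) (N : ℕ) :
    ∃ C, 0 ≤ C ∧ ∀ x y, ‖f (x - y) - f x‖ ≤ C * (1 + ‖y‖) ^ N / (1 + ‖x‖) ^ N * ‖y‖ := by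
  obtain ⟨C, hC, h_fderiv⟩ := exists_schwartz_norm_le_div (SchwartzMap.fderivCLM ℝ V F f) N
  simp only [SchwartzMap.fderivCLM_apply] at h_fderiv
  refine ⟨C, hC, fun x y => ?_⟩
  have h_mem : x - y ∈ Metric.closedBall x ‖y‖ := by simp
  simpa using Convex.norm_image_sub_le_of_norm_fderiv_le (𝕜 := ℝ)
    (fun p _ => f.differentiableAt) (fun p hp => (h_fderiv p).trans
      (div_one_add_norm_pow_le hC N (mem_closedBall_iff_norm'.1 hp)))
    (convex_closedBall x ‖y‖) (Metric.mem_closedBall_self (norm_nonneg y)) h_mem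

/-- The weight `(1 + ‖x‖) ^ (-(d + 1))` on a space of dimension `d`: the smallest integral power
which is integrable. -/
noncomputable def decayWeight [NormedSpace ℝ V] (x : V) : ℝ :=
  ((1 + ‖x‖) ^ (Module.finrank ℝ V + 1))⁻¹

variable [NormedSpace ℝ V]

lemma decayWeight_pos (x : V) : 0 < decayWeight x := by unfold decayWeight; positivity

lemma continuous_decayWeight : Continuous (decayWeight (V := V)) := by
  unfold decayWeight
  exact Continuous.inv₀ (by fun_prop) fun x => by positivity

lemma exists_schwartz_norm_le_decayWeight {F : Type*} [NormedAddCommGroup F] [NormedSpace ℝ F]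
    (f : SchwartzMap V F) : ∃ C, ∀ x, ‖f x‖ ≤ C * decayWeight x := by
  obtain ⟨C, -, hC⟩ := exists_schwartz_norm_le_div f (Module.finrank ℝ V + 1)
  exact ⟨C, hC⟩

lemma integrable_mul_of_norm_le_weight {X : Type*} [MeasurableSpace X] {μ : Measure X}
    {w : X → ℝ} {v k : X → ℂ} (hw : ∀ x, 0 < w x) (hwm : Measurable w)
    (hv : Integrable (fun x => w x • v x) μ) (hk : AEStronglyMeasurable k μ) {C : ℝ}
    (hkC : ∀ x, ‖k x‖ ≤ C * w x) : Integrable (fun x => v x * k x) μ := by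
  have h_prod : Integrable (fun x => ((w x)⁻¹ • k x) * (w x • v x)) μ := by
    refine hv.bdd_mul (c := C) (hwm.inv.aestronglyMeasurable.smul hk) (.of_forall fun x => ?_)
    rw [norm_smul, norm_inv, Real.norm_of_nonneg (hw x).le, inv_mul_le_iff₀ (hw x), mul_comm]
    exact hkC x
  refine h_prod.congr (.of_forall fun x => ?_)
  have hx : ((w x : ℝ) : ℂ) ≠ 0 := by exact_mod_cast (hw x).ne'
  simp only [Complex.real_smul, Complex.ofReal_inv]
  field_simp

variable [MeasurableSpace V] [BorelSpace V] {μ : Measure V}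

lemma integrable_mul_schwartz_of_decayWeight {v : V → ℂ}
    (hv : Integrable (fun x => decayWeight x • v x) μ) (f : SchwartzMap V ℂ) :
    Integrable (fun x => v x * f x) μ := by
  obtain ⟨C, hC⟩ := exists_schwartz_norm_le_decayWeight f
  exact integrable_mul_of_norm_le_weight decayWeight_pos continuous_decayWeight.measurable hv
    f.continuous.aestronglyMeasurable hC

variable [FiniteDimensional ℝ V]

lemma integrable_decayWeight [μ.IsAddHaarMeasure] : Integrable (decayWeight (V := V)) μ := by
  have h := integrable_one_add_norm (E := V) (μ := μ)
    (r := ((Module.finrank ℝ V + 1 : ℕ) : ℝ)) (by push_cast; linarith)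
  refine h.congr (.of_forall fun x => ?_)
  simp only
  rw [Real.rpow_neg (by positivity), Real.rpow_natCast, decayWeight]

lemma integrable_one_add_norm_pow_mul_schwartz {F : Type*} [NormedAddCommGroup F]
    [NormedSpace ℝ F] [μ.IsAddHaarMeasure] (f : SchwartzMap V F) (N : ℕ) :
    Integrable (fun x => (1 + ‖x‖) ^ N * ‖f x‖) μ := by
  obtain ⟨C, -, hC⟩ := exists_schwartz_norm_le_div f (N + (Module.finrank ℝ V + 1))
  refine ((integrable_decayWeight (μ := μ)).const_mul C).mono'
    (by have := f.continuous; fun_prop) (.of_forall fun x => ?_)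
  rw [Real.norm_of_nonneg (by positivity)]
  calc (1 + ‖x‖) ^ N * ‖f x‖
      ≤ (1 + ‖x‖) ^ N * (C / (1 + ‖x‖) ^ (N + (Module.finrank ℝ V + 1))) := by
        gcongr; exact hC x
    _ = C * decayWeight x := by rw [decayWeight, pow_add]; field_simp

lemma locallyIntegrable_of_decayWeight {v : V → ℂ}
    (hv : Integrable (fun x => decayWeight x • v x) μ) : LocallyIntegrable v μ := by
  have h := hv.locallyIntegrable.continuous_smul (g := fun x => (decayWeight x)⁻¹)
    (continuous_decayWeight.inv₀ fun x => (decayWeight_pos x).ne')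
  refine h.congr (.of_forall fun x => ?_)
  simp only [inv_smul_smul₀ (decayWeight_pos x).ne']

end Decay

section Test

/-- Smooth compactly supported functions. -/
structure IsTest {V : Type*} [NormedAddCommGroup V] [NormedSpace ℝ V] (Φ : V → ℂ) : Prop where
  contDiff : ContDiff ℝ ∞ Φ
  hasCompactSupport : HasCompactSupport Φ

/-- Smooth compactly supported functions that vanish near the origin. -/
structure IsPuncturedTest {V : Type*} [NormedAddCommGroup V] [NormedSpace ℝ V]
    (Φ : V → ℂ) : Prop extends IsTest Φ where
  eventually_eq_zero : ∀ᶠ ξ in nhds 0, Φ ξ = 0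

/-- A smooth cutoff function which equals one near the origin. -/
noncomputable def cutoff {V : Type*} [NormedAddCommGroup V] [InnerProductSpace ℝ V]
    (ξ : V) : ℂ :=
  (((⟨1, 2, one_pos, one_lt_two⟩ : ContDiffBump (0 : V)) ξ : ℝ) : ℂ)

namespace IsTest

variable {V : Type*} [NormedAddCommGroup V] [NormedSpace ℝ V] {Φ Ψ : V → ℂ}

lemma mul_left (hΨ : IsTest Ψ) (hΦ : ContDiff ℝ ∞ Φ) : IsTest fun ξ => Φ ξ * Ψ ξ where
  contDiff := hΦ.mul hΨ.contDiff
  hasCompactSupport := hΨ.hasCompactSupport.mul_left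

lemma sub (hΦ : IsTest Φ) (hΨ : IsTest Ψ) : IsTest fun ξ => Φ ξ - Ψ ξ where
  contDiff := hΦ.contDiff.sub hΨ.contDiff
  hasCompactSupport := hΦ.hasCompactSupport.sub hΨ.hasCompactSupport

lemma comp_smul (hΦ : IsTest Φ) {r : ℝ} (hr : r ≠ 0) : IsTest fun ξ => Φ (r • ξ) where
  contDiff := hΦ.contDiff.comp (contDiff_const_smul r)
  hasCompactSupport := hΦ.hasCompactSupport.comp_smul hr

lemma integrable [MeasurableSpace V] [BorelSpace V] {μ : Measure V}
    [IsFiniteMeasureOnCompacts μ] (hΦ : IsTest Φ) : Integrable Φ μ :=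
  hΦ.contDiff.continuous.integrable_of_hasCompactSupport hΦ.hasCompactSupport

end IsTest

variable {V : Type*} [NormedAddCommGroup V] [InnerProductSpace ℝ V]

lemma cutoff_eq_one {ξ : V} (h : ‖ξ‖ ≤ 1) : cutoff ξ = 1 := by
  rw [cutoff, ContDiffBump.one_of_mem_closedBall _ (by simpa using h), Complex.ofReal_one]

lemma eventually_cutoff_smul_eq_one (r : ℝ) : ∀ᶠ ξ : V in nhds 0, cutoff (r • ξ) = 1 := by
  have h_norm : Filter.Tendsto (fun ξ : V => ‖r • ξ‖) (nhds 0) (nhds 0) :=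
    Continuous.tendsto' (by fun_prop) _ _ (by simp)
  filter_upwards [h_norm.eventually_lt_const one_pos] with ξ hξ
  exact cutoff_eq_one hξ.le

variable [FiniteDimensional ℝ V]

lemma isTest_cutoff : IsTest (cutoff (V := V)) where
  contDiff := Complex.ofRealCLM.contDiff.comp (ContDiffBump.contDiff _)
  hasCompactSupport := (ContDiffBump.hasCompactSupport _).comp_left Complex.ofReal_zero

lemma isPuncturedTest_mul_cutoff_sub {m : V → ℂ} (hm : ContDiff ℝ ∞ m) {r r' : ℝ} (hr : r ≠ 0)
    (hr' : r' ≠ 0) :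
    IsPuncturedTest fun ξ => m ξ * cutoff (r • ξ) - m ξ * cutoff (r' • ξ) where
  toIsTest := ((isTest_cutoff.comp_smul hr).mul_left hm).sub
    ((isTest_cutoff.comp_smul hr').mul_left hm)
  eventually_eq_zero := by
    filter_upwards [eventually_cutoff_smul_eq_one r, eventually_cutoff_smul_eq_one r'] with ξ h h'
    rw [h, h', sub_self]

variable [MeasurableSpace V] [BorelSpace V]

lemma IsTest.exists_schwartz {Φ : V → ℂ} (hΦ : IsTest Φ) :
    ∃ f : SchwartzMap V ℂ, ⇑f = 𝓕⁻ Φ ∧ ⇑(𝓕 f : SchwartzMap V ℂ) = Φ := by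
  refine ⟨𝓕⁻ (hΦ.hasCompactSupport.toSchwartzMap hΦ.contDiff), ?_, ?_⟩
  · rw [SchwartzMap.fourierInv_coe]
    rfl
  · rw [FourierTransform.fourier_fourierInv_eq]
    rfl

lemma integral_schwartz_eq_fourier_zero (f : SchwartzMap V ℂ) : ∫ x, f x = 𝓕 f 0 := by
  rw [SchwartzMap.fourier_coe, Real.fourier_eq]
  simp

lemma exists_schwartz_fourier_eq_cutoff :
    ∃ X : SchwartzMap V ℂ, ⇑X = 𝓕⁻ (cutoff (V := V)) ∧ ⇑(𝓕 X : SchwartzMap V ℂ) = cutoff ∧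
      ∫ x, X x = 1 := by
  obtain ⟨X, hX, hX_fourier⟩ := (isTest_cutoff (V := V)).exists_schwartz
  refine ⟨X, hX, hX_fourier, ?_⟩
  rw [integral_schwartz_eq_fourier_zero, hX_fourier, cutoff_eq_one (by simp)]

end Test

section Mollify

lemma integrable_fourierChar_inner_smul {V E : Type*} [NormedAddCommGroup V]
    [InnerProductSpace ℝ V] [MeasurableSpace V] [BorelSpace V] [NormedAddCommGroup E]
    [NormedSpace ℂ E] {μ : Measure V} {F : V → E} (hF : Integrable F μ)
    (x : V) : Integrable (fun ξ => 𝐞 ⟪ξ, x⟫ • F ξ) μ := by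
  simpa using (Real.fourierIntegral_convergent_iff (-x)).2 hF

variable {V : Type*} [NormedAddCommGroup V] [InnerProductSpace ℝ V] [FiniteDimensional ℝ V]
  [MeasurableSpace V] [BorelSpace V] (X h : SchwartzMap V ℂ)

/-- The average of `h` at scale `r` with profile `X`, that is the Fourier multiplier
`ξ ↦ 𝓕 X (r • ξ)` applied to `h`. -/
noncomputable def mollify (r : ℝ) (x : V) : ℂ := ∫ z, X z * h (x - r • z)

lemma fourierInv_fourier_mul_comp_smul (r : ℝ) :
    𝓕⁻ (fun ξ => 𝓕 h ξ * 𝓕 X (r • ξ)) = mollify X h r := by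
  ext x
  have h_char := integrable_fourierChar_inner_smul ((𝓕 h).integrable (μ := volume)) x
  have h_eval : ∀ z, h (x - r • z) =
      VectorFourier.fourierIntegral 𝐞 volume (r • innerₗ V).flip
        (fun ξ => 𝐞 ⟪ξ, x⟫ • 𝓕 h ξ) z := fun z => by
    rw [← FourierTransform.fourierInv_fourier_eq (F := SchwartzMap V ℂ) h,
      SchwartzMap.fourierInv_coe, Real.fourierInv_eq, FourierTransform.fourierInv_fourier_eq]
    refine integral_congr_ae (.of_forall fun ξ => ?_)
    have h_arg : ⟪ξ, x - r • z⟫ = -(r • innerₗ V) z ξ + ⟪ξ, x⟫ := by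
      simp only [inner_sub_right, real_inner_smul_right, LinearMap.smul_apply, innerₗ_apply_apply,
        real_inner_comm ξ z, smul_eq_mul]
      ring
    simp only [LinearMap.flip_apply, h_arg, AddChar.map_add_eq_mul, Circle.smul_def,
      Circle.coe_mul, smul_eq_mul, mul_assoc]
  rw [mollify]
  simp_rw [h_eval, ← smul_eq_mul (X _)]
  rw [← VectorFourier.integral_fourierIntegral_smul_eq_flip Real.continuous_fourierChar
    (by simpa using (by fun_prop)) X.integrable h_char, Real.fourierInv_eq]
  refine integral_congr_ae (.of_forall fun ξ => ?_)
  have h_scale : 𝓕 X (r • ξ) = VectorFourier.fourierIntegral 𝐞 volume (r • innerₗ V) X ξ := by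
    simp [SchwartzMap.fourier_coe, Real.fourier_eq, VectorFourier.fourierIntegral,
      real_inner_smul_right]
  simp only [h_scale, Circle.smul_def, smul_eq_mul]
  ring

lemma exists_norm_mollify_le (N : ℕ) :
    ∃ C, 0 ≤ C ∧ ∀ r ∈ Ioc (0 : ℝ) 1, ∀ x, ‖mollify X h r x‖ ≤ C / (1 + ‖x‖) ^ N := by
  obtain ⟨C, hC, h_decay⟩ := exists_schwartz_norm_le_div h N
  have h_int := integrable_one_add_norm_pow_mul_schwartz (μ := volume) X N
  refine ⟨C * ∫ z, (1 + ‖z‖) ^ N * ‖X z‖, by positivity, fun r hr x => ?_⟩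
  rw [mul_div_right_comm, ← integral_const_mul]
  refine norm_integral_le_of_norm_le (h_int.const_mul _) (.of_forall fun z => ?_)
  have h_dist : ‖x - (x - r • z)‖ ≤ ‖z‖ := by
    rw [sub_sub_cancel, norm_smul, Real.norm_of_nonneg hr.1.le]
    exact mul_le_of_le_one_left (norm_nonneg _) hr.2
  calc ‖X z * h (x - r • z)‖ ≤ ‖X z‖ * (C * (1 + ‖z‖) ^ N / (1 + ‖x‖) ^ N) := by
        rw [norm_mul]
        gcongr
        exact (h_decay _).trans (div_one_add_norm_pow_le hC N h_dist)
    _ = C / (1 + ‖x‖) ^ N * ((1 + ‖z‖) ^ N * ‖X z‖) := by ring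

lemma continuous_uncurry_mollify : Continuous (Function.uncurry (mollify X h)) := by
  obtain ⟨C, -, hC⟩ := exists_schwartz_norm_le_div h 0
  have hX_cont := X.continuous
  have hh_cont := h.continuous
  refine continuous_of_dominated (bound := fun z => ‖X z‖ * C)
    (fun p => Continuous.aestronglyMeasurable (by fun_prop)) (fun p => .of_forall fun z => ?_)
    (X.integrable.norm.mul_const C) (.of_forall fun z => by fun_prop)
  rw [norm_mul]
  gcongr
  simpa using hC (p.2 - p.1 • z)

lemma mollify_zero (x : V) : mollify X h 0 x = (∫ z, X z) * h x := by
  simp [mollify, integral_mul_const]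

lemma mollify_eq_integral_sub (hh : ∫ y, h y = 0) {r : ℝ} (hr : 0 < r) (x : V) :
    mollify X h r x = (r ^ Module.finrank ℝ V)⁻¹ •
      ∫ y, (X (r⁻¹ • x - r⁻¹ • y) - X (r⁻¹ • x)) * h y := by
  have h_int : Integrable fun y => X (r⁻¹ • x - r⁻¹ • y) * h y := by
    obtain ⟨C, -, hC⟩ := exists_schwartz_norm_le_div X 0
    have := X.continuous
    exact h.integrable.bdd_mul (c := C) (Continuous.aestronglyMeasurable (by fun_prop))
      (.of_forall fun y => by simpa using hC _)
  have h_subst : mollify X h r x = (r ^ Module.finrank ℝ V)⁻¹ •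
      ∫ y, X (r⁻¹ • x - r⁻¹ • y) * h y := by
    rw [← integral_sub_left_eq_self (fun y => X (r⁻¹ • x - r⁻¹ • y) * h y) volume x]
    have h_comp := Measure.integral_comp_smul volume (fun z => X (r⁻¹ • z) * h (x - z)) r
    simp only [inv_smul_smul₀ hr.ne', abs_of_pos (inv_pos.2 (pow_pos hr _))] at h_comp
    simp only [← smul_sub, sub_sub_cancel, mollify, h_comp]
  rw [h_subst]
  simp_rw [sub_mul]
  rw [integral_sub h_int (h.integrable.const_mul _), integral_const_mul, hh, mul_zero, sub_zero]

lemma exists_norm_mollify_le_of_integral_eq_zero (hh : ∫ y, h y = 0) :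
    ∃ C, 0 ≤ C ∧ ∀ r : ℝ, 1 ≤ r → ∀ x,
      ‖mollify X h r x‖ ≤ C / (r + ‖x‖) ^ (Module.finrank ℝ V + 1) := by
  set d := Module.finrank ℝ V
  obtain ⟨C, hC, h_lip⟩ := exists_schwartz_norm_sub_le X (d + 1)
  have h_int := integrable_one_add_norm_pow_mul_schwartz (μ := volume) h (d + 2)
  refine ⟨C * ∫ y, (1 + ‖y‖) ^ (d + 2) * ‖h y‖, by positivity, fun r hr x => ?_⟩
  have hr0 : 0 < r := one_pos.trans_le hr
  have h_smul : ∀ p : V, ‖r⁻¹ • p‖ = r⁻¹ * ‖p‖ := fun p => by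
    rw [norm_smul, norm_inv, Real.norm_of_nonneg hr0.le]
  have h_bound : ∀ y, ‖X (r⁻¹ • x - r⁻¹ • y) - X (r⁻¹ • x)‖ ≤
      C / (1 + r⁻¹ * ‖x‖) ^ (d + 1) * r⁻¹ * (1 + ‖y‖) ^ (d + 2) := fun y => by
    refine (h_lip _ _).trans ?_
    rw [h_smul, h_smul]
    calc C * (1 + r⁻¹ * ‖y‖) ^ (d + 1) / (1 + r⁻¹ * ‖x‖) ^ (d + 1) * (r⁻¹ * ‖y‖)
        ≤ C * (1 + ‖y‖) ^ (d + 1) / (1 + r⁻¹ * ‖x‖) ^ (d + 1) * (r⁻¹ * (1 + ‖y‖)) := by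
          gcongr
          · exact mul_le_of_le_one_left (norm_nonneg y) (inv_le_one_of_one_le₀ hr)
          · linarith
      _ = _ := by rw [pow_succ _ (d + 1)]; ring
  rw [mollify_eq_integral_sub X h hh hr0, norm_smul, Real.norm_of_nonneg (by positivity)]
  calc _ ≤ (r ^ d)⁻¹ *
          ∫ y, C / (1 + r⁻¹ * ‖x‖) ^ (d + 1) * r⁻¹ * ((1 + ‖y‖) ^ (d + 2) * ‖h y‖) := by
        gcongr
        refine norm_integral_le_of_norm_le (h_int.const_mul _) (.of_forall fun y => ?_)
        rw [norm_mul, ← mul_assoc]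
        gcongr
        exact h_bound y
    _ = C * (∫ y, (1 + ‖y‖) ^ (d + 2) * ‖h y‖) / (r * (1 + r⁻¹ * ‖x‖)) ^ (d + 1) := by
        rw [integral_const_mul, mul_pow, pow_succ r]
        field_simp
    _ = _ := by rw [mul_add, mul_one, mul_inv_cancel_left₀ hr0.ne']

end Mollify

section OriginSpectrum

variable {V : Type*} [NormedAddCommGroup V] [InnerProductSpace ℝ V] [FiniteDimensional ℝ V]
  [MeasurableSpace V] [BorelSpace V] {v : V → ℂ}

lemma integral_mul_mollify_sub_eq_zero
    (h_test : ∀ Φ : V → ℂ, IsPuncturedTest Φ → ∫ x, v x * 𝓕⁻ Φ x = 0) (X h : SchwartzMap V ℂ)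
    (hX : ⇑(𝓕 X : SchwartzMap V ℂ) = cutoff) {r : ℝ} (hr : r ≠ 0) :
    ∫ x, v x * (mollify X h r x - mollify X h r⁻¹ x) = 0 := by
  have h_int : ∀ {r : ℝ}, r ≠ 0 → Integrable fun ξ => 𝓕 h ξ * cutoff (r • ξ) := fun hr =>
    ((isTest_cutoff.comp_smul hr).mul_left (SchwartzMap.smooth _ _)).integrable
  have h_sub : 𝓕⁻ (fun ξ => 𝓕 h ξ * cutoff (r • ξ) - 𝓕 h ξ * cutoff (r⁻¹ • ξ)) =
      fun x => mollify X h r x - mollify X h r⁻¹ x := by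
    ext x
    simp only [← fourierInv_fourier_mul_comp_smul, hX, Real.fourierInv_eq]
    rw [← integral_sub]
    · simp only [smul_sub]
    · exact integrable_fourierChar_inner_smul (h_int hr) x
    · exact integrable_fourierChar_inner_smul (h_int (inv_ne_zero hr)) x
  rw [← h_test _ (isPuncturedTest_mul_cutoff_sub (SchwartzMap.smooth (𝓕 h) _) hr
    (inv_ne_zero hr)), h_sub]

lemma exists_norm_mollify_sub_le (X h : SchwartzMap V ℂ) (hh : ∫ y, h y = 0) :
    ∃ C, ∀ r ∈ Ioc (0 : ℝ) 1, ∀ x,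
      ‖mollify X h r x - mollify X h r⁻¹ x‖ ≤ C * decayWeight x := by
  obtain ⟨C, -, h_high⟩ := exists_norm_mollify_le X h (Module.finrank ℝ V + 1)
  obtain ⟨K, hK, h_low⟩ := exists_norm_mollify_le_of_integral_eq_zero X h hh
  refine ⟨C + K, fun r hr x => ?_⟩
  have hr_inv : 1 ≤ r⁻¹ := (one_le_inv₀ hr.1).2 hr.2
  have h_low_le : ‖mollify X h r⁻¹ x‖ ≤ K / (1 + ‖x‖) ^ (Module.finrank ℝ V + 1) :=
    (h_low r⁻¹ hr_inv x).trans (by gcongr)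
  rw [add_mul]
  exact (norm_sub_le _ _).trans (add_le_add (h_high r hr x) h_low_le)

lemma tendsto_mollify_sub {X : SchwartzMap V ℂ} (hX : ∫ z, X z = 1) {h : SchwartzMap V ℂ}
    (hh : ∫ y, h y = 0) (x : V) :
    Filter.Tendsto (fun r => mollify X h r x - mollify X h r⁻¹ x) (nhdsWithin 0 (Ioi 0))
      (nhds (h x)) := by
  obtain ⟨K, -, h_low⟩ := exists_norm_mollify_le_of_integral_eq_zero X h hh
  have h_cont : Continuous fun r => mollify X h r x :=
    (continuous_uncurry_mollify X h).comp (Continuous.prodMk_left x)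
  have h_high_tendsto : Filter.Tendsto (fun r => mollify X h r x) (nhds 0) (nhds (h x)) :=
    h_cont.tendsto' _ _ (by rw [mollify_zero, hX, one_mul])
  have h_low_tendsto : Filter.Tendsto (fun r => mollify X h r x) Filter.atTop (nhds 0) :=
    squeeze_zero_norm' ((Filter.eventually_ge_atTop 1).mono fun r hr => h_low r hr x)
      (((Filter.tendsto_pow_atTop (Nat.succ_ne_zero _)).comp
        (Filter.tendsto_atTop_add_const_right _ _ Filter.tendsto_id)).const_div_atTop K)
  simpa using (h_high_tendsto.mono_left nhdsWithin_le_nhds).sub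
    (h_low_tendsto.comp tendsto_inv_nhdsGT_zero)

/-- Truncating the frequencies of `h` to a compact set away from the origin changes `h` by little,
at low frequencies because `h` has mean zero. -/
lemma integral_mul_eq_zero_of_puncturedTest (hv : Integrable fun x => decayWeight x • v x)
    (h_test : ∀ Φ : V → ℂ, IsPuncturedTest Φ → ∫ x, v x * 𝓕⁻ Φ x = 0)
    (h : SchwartzMap V ℂ) (hh : ∫ x, h x = 0) : ∫ x, v x * h x = 0 := by
  obtain ⟨X, -, hX, hX_one⟩ := exists_schwartz_fourier_eq_cutoff (V := V)
  obtain ⟨C, hC⟩ := exists_norm_mollify_sub_le X h hh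
  have h_Ioc : ∀ᶠ r : ℝ in nhdsWithin 0 (Ioi 0), r ∈ Ioc (0 : ℝ) 1 := Ioc_mem_nhdsGT one_pos
  have h_cont : ∀ r, Continuous (mollify X h r) := fun r =>
    (continuous_uncurry_mollify X h).comp (Continuous.prodMk_right r)
  have h_lim : Filter.Tendsto (fun r => ∫ x, v x * (mollify X h r x - mollify X h r⁻¹ x))
      (nhdsWithin 0 (Ioi 0)) (nhds (∫ x, v x * h x)) := by
    refine tendsto_integral_filter_of_dominated_convergence (fun x => C * ‖decayWeight x • v x‖)
      (.of_forall fun r => ?_) (h_Ioc.mono fun r hr => .of_forall fun x => ?_)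
      (hv.norm.const_mul _) (.of_forall fun x => (tendsto_mollify_sub hX_one hh x).const_mul (v x))
    · exact (locallyIntegrable_of_decayWeight hv).aestronglyMeasurable.mul
        ((h_cont r).sub (h_cont r⁻¹)).aestronglyMeasurable
    · rw [norm_mul, norm_smul, Real.norm_of_nonneg (decayWeight_pos x).le, mul_comm, ← mul_assoc]
      gcongr
      exact hC r hr x
  refine tendsto_nhds_unique h_lim (tendsto_const_nhds.congr' ?_)
  filter_upwards [h_Ioc] with r hr
  exact (integral_mul_mollify_sub_eq_zero h_test X h hX hr.1.ne').symm

/-- A function of sublinear growth whose spectrum lies in the origin is constant. -/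
lemma ae_const_of_puncturedTest (hv : Integrable fun x => decayWeight x • v x)
    (h_test : ∀ Φ : V → ℂ, IsPuncturedTest Φ → ∫ x, v x * 𝓕⁻ Φ x = 0) :
    ∃ c : ℂ, ∀ᵐ x, v x = c := by
  obtain ⟨X, -, -, hX_one⟩ := exists_schwartz_fourier_eq_cutoff (V := V)
  refine ⟨∫ x, v x * X x, ae_eq_of_integral_contDiff_smul_eq (locallyIntegrable_of_decayWeight hv)
    (locallyIntegrable_const _) fun g hg hgc => ?_⟩
  have hgc' : HasCompactSupport fun x => (g x : ℂ) := hgc.comp_left Complex.ofReal_zero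
  let G : SchwartzMap V ℂ := hgc'.toSchwartzMap (Complex.ofRealCLM.contDiff.comp hg)
  have hG : ∀ x, G x = (g x : ℂ) := fun x => rfl
  have h_mean : ∫ x, (G - (∫ y, G y) • X) x = 0 := by
    simp only [sub_apply, smul_apply, smul_eq_mul]
    rw [integral_sub G.integrable (X.integrable.const_mul _), integral_const_mul, hX_one, mul_one,
      sub_self]
  have h_zero := integral_mul_eq_zero_of_puncturedTest hv h_test _ h_mean
  simp only [sub_apply, smul_apply, smul_eq_mul, mul_sub, mul_left_comm (v _)] at h_zero
  rw [integral_sub (integrable_mul_schwartz_of_decayWeight hv G)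
    ((integrable_mul_schwartz_of_decayWeight hv X).const_mul _), integral_const_mul,
    sub_eq_zero] at h_zero
  simp only [Complex.real_smul, ← hG]
  rw [integral_mul_const, ← h_zero]
  simp only [mul_comm]

end OriginSpectrum

section JointTransform

lemma IsTest.integrable_mul_norm {V : Type*} [NormedAddCommGroup V] [NormedSpace ℝ V]
    [MeasurableSpace V] [BorelSpace V] {μ : Measure V} [IsFiniteMeasureOnCompacts μ] {Φ : V → ℂ}
    (hΦ : IsTest Φ) {w : V → ℝ} (hw : Continuous w) : Integrable (fun ξ => w ξ * ‖Φ ξ‖) μ := by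
  have := hΦ.contDiff.continuous
  exact Continuous.integrable_of_hasCompactSupport (by fun_prop) hΦ.hasCompactSupport.norm.mul_left

lemma IsTest.prod {V W : Type*} [NormedAddCommGroup V] [NormedSpace ℝ V] [NormedAddCommGroup W]
    [NormedSpace ℝ W] {Φ : V → ℂ} {Ψ : W → ℂ} (hΦ : IsTest Φ) (hΨ : IsTest Ψ) :
    IsTest fun p : V × W => Φ p.1 * Ψ p.2 where
  contDiff := (hΦ.contDiff.comp contDiff_fst).mul (hΨ.contDiff.comp contDiff_snd)
  hasCompactSupport :=
    .intro (hΦ.hasCompactSupport.prod hΨ.hasCompactSupport) fun p hp => by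
      by_contra hne
      exact hp ⟨subset_tsupport _ (left_ne_zero_of_mul hne),
        subset_tsupport _ (right_ne_zero_of_mul hne)⟩

variable {V W : Type*}
  [NormedAddCommGroup V] [InnerProductSpace ℝ V] [FiniteDimensional ℝ V] [MeasurableSpace V]
  [BorelSpace V]
  [NormedAddCommGroup W] [InnerProductSpace ℝ W] [FiniteDimensional ℝ W] [MeasurableSpace W]
  [BorelSpace W]

/-- The inverse Fourier transform on `V × W`, which is not an inner product space: the pairing is
that of the orthogonal sum. -/
noncomputable def jointFourierInv (Φ : V × W → ℂ) (x : V) (t : W) : ℂ :=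
  ∫ p : V × W, (𝐞 (⟪p.1, x⟫ + ⟪p.2, t⟫) : ℂ) * Φ p

lemma jointFourierInv_add {Φ Ψ : V × W → ℂ} (hΦ : Integrable Φ) (hΨ : Integrable Ψ) (x : V)
    (t : W) : jointFourierInv (fun p => Φ p + Ψ p) x t =
      jointFourierInv Φ x t + jointFourierInv Ψ x t := by
  have h_int : ∀ {F : V × W → ℂ}, Integrable F →
      Integrable fun p : V × W => (𝐞 (⟪p.1, x⟫ + ⟪p.2, t⟫) : ℂ) * F p := fun hF =>
    hF.bdd_mul (c := 1) (Continuous.aestronglyMeasurable (by fun_prop))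
      (.of_forall fun p => (Circle.norm_coe _).le)
  simp only [jointFourierInv, mul_add, integral_add (h_int hΦ) (h_int hΨ)]

lemma jointFourierInv_mul (Φ : V → ℂ) (Ψ : W → ℂ) (x : V) (t : W) :
    jointFourierInv (fun p => Φ p.1 * Ψ p.2) x t = 𝓕⁻ Φ x * 𝓕⁻ Ψ t := by
  rw [jointFourierInv, Real.fourierInv_eq, Real.fourierInv_eq, ← integral_prod_mul,
    Measure.volume_eq_prod]
  simp only [AddChar.map_add_eq_mul, Circle.smul_def, Circle.coe_mul, smul_eq_mul,
    mul_mul_mul_comm]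

lemma IsTest.exists_schwartz_eq_jointFourierInv {Φ : V × W → ℂ} (hΦ : IsTest Φ) :
    ∃ φ : SchwartzMap (V × W) ℂ, ∀ x t, φ (x, t) = jointFourierInv Φ x t := by
  let e := WithLp.prodContinuousLinearEquiv 2 ℝ V W
  have hΦe : IsTest (Φ ∘ e) :=
    ⟨hΦ.contDiff.comp e.contDiff, hΦ.hasCompactSupport.comp_homeomorph e.toHomeomorph⟩
  obtain ⟨f, hf, -⟩ := hΦe.exists_schwartz
  refine ⟨SchwartzMap.compCLMOfContinuousLinearEquiv ℝ e.symm f, fun x t => ?_⟩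
  rw [SchwartzMap.compCLMOfContinuousLinearEquiv_apply, Function.comp_apply, hf,
    Real.fourierInv_eq, jointFourierInv,
    ← (WithLp.volume_preserving_ofLp V W).integral_comp e.toHomeomorph.measurableEmbedding]
  rfl

end JointTransform

section Equation

variable {V W : Type*}
  [NormedAddCommGroup V] [InnerProductSpace ℝ V] [FiniteDimensional ℝ V] [MeasurableSpace V]
  [BorelSpace V]
  [NormedAddCommGroup W] [InnerProductSpace ℝ W] [FiniteDimensional ℝ W] [MeasurableSpace W]
  [BorelSpace W]
  (D₁ : DifferenceOperator V) (D₂ : DifferenceOperator W)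

/-- The Fourier multiplier of the sum of `D₁` in the first variable and `D₂` in the second. -/
noncomputable def jointSymbol (p : V × W) : ℂ := D₁.symbol p.1 + D₂.symbol p.2

/-- Distributional solutions of the equation `D₁* u + D₂* u = 0` on `V × W`, where the adjoints of
`D₁` and `D₂` act in the first and the second variable. -/
def IsDistributionalSolution (u : V × W → ℝ) : Prop :=
  ∀ φ : SchwartzMap (V × W) ℝ, ∫ t, ∫ x,
    u (x, t) * (D₂.apply (fun τ => φ (x, τ)) t + D₁.apply (fun x' => φ (x', t)) x) = 0

/-- The equation of `IsDistributionalSolution` for complex-valued functions, tested against the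
Fourier integrals of test functions. -/
def IsSpectralSolution (u : V × W → ℂ) : Prop :=
  ∀ (Φ : V × W → ℂ) (K : V → W → ℂ), IsTest Φ →
    jointFourierInv (fun p => jointSymbol D₁ D₂ p * Φ p) = K →
    (∀ᵐ t, Integrable fun x => u (x, t) * K x t) →
    (Integrable fun t => ∫ x, u (x, t) * K x t) → ∫ t, ∫ x, u (x, t) * K x t = 0

variable {D₁ D₂}

lemma DifferenceOperator.apply_clm_superposition {Z : Type*} [MeasurableSpace Z] {μ : Measure Z}
    [SFinite μ] {ξ : Z → V} {Ψ : Z → ℂ} (D : DifferenceOperator V) (ρ : ℂ →L[ℝ] ℝ)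
    (hξ : Measurable ξ) (hΨ : Integrable Ψ μ)
    (hΨξ : Integrable (fun z => (1 + ‖ξ z‖) ^ D.steps.length * ‖Ψ z‖) μ) (x : V) :
    D.apply (fun x' => ρ (∫ z, (𝐞 ⟪ξ z, x'⟫ : ℂ) * Ψ z ∂μ)) x =
      ρ (∫ z, (𝐞 ⟪ξ z, x⟫ : ℂ) * (D.symbol (ξ z) * Ψ z) ∂μ) := by
  rw [← D.apply_superposition hξ hΨ hΨξ, apply, apply,
    ← ρ.integral_comp_comm (D.integrable_weight_smul_iterDiff_superposition hξ hΨ hΨξ x)]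
  refine integral_congr_ae (.of_forall fun y => ?_)
  simp only [map_smul]
  exact congrArg _ (iterDiff_map (ρ : ℂ →+ ℝ) _ _ _ _)

lemma apply_add_apply_clm_jointFourierInv {Φ : V × W → ℂ} (hΦ : IsTest Φ) (ρ : ℂ →L[ℝ] ℝ)
    (x : V) (t : W) :
    D₂.apply (fun τ => ρ (jointFourierInv Φ x τ)) t +
        D₁.apply (fun x' => ρ (jointFourierInv Φ x' t)) x =
      ρ (jointFourierInv (fun p => jointSymbol D₁ D₂ p * Φ p) x t) := by
  have h_unimodular : ∀ {θ : V × W → ℝ}, Continuous θ →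
      Integrable fun p : V × W => (𝐞 (θ p) : ℂ) * Φ p := fun hθ =>
    hΦ.integrable.bdd_mul (c := 1) (Continuous.aestronglyMeasurable (by fun_prop))
      (.of_forall fun p => (Circle.norm_coe _).le)
  have h_snd : ∀ r, jointFourierInv Φ x r =
      ∫ p : V × W, (𝐞 ⟪p.2, r⟫ : ℂ) * ((𝐞 ⟪p.1, x⟫ : ℂ) * Φ p) := fun r => by
    simp only [jointFourierInv, add_comm ⟪_, x⟫, AddChar.map_add_eq_mul, Circle.coe_mul, mul_assoc]
  have h_fst : ∀ r, jointFourierInv Φ r t =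
      ∫ p : V × W, (𝐞 ⟪p.1, r⟫ : ℂ) * ((𝐞 ⟪p.2, t⟫ : ℂ) * Φ p) := fun r => by
    simp only [jointFourierInv, AddChar.map_add_eq_mul, Circle.coe_mul, mul_assoc]
  have hΨ₂ := h_unimodular (θ := fun p => ⟪p.1, x⟫) (by fun_prop)
  have hΨ₁ := h_unimodular (θ := fun p => ⟪p.2, t⟫) (by fun_prop)
  have h_moment₂ : Integrable fun p : V × W =>
      (1 + ‖p.2‖) ^ D₂.steps.length * ‖(𝐞 ⟪p.1, x⟫ : ℂ) * Φ p‖ := by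
    simpa only [norm_mul, Circle.norm_coe, one_mul] using hΦ.integrable_mul_norm (by fun_prop)
  have h_moment₁ : Integrable fun p : V × W =>
      (1 + ‖p.1‖) ^ D₁.steps.length * ‖(𝐞 ⟪p.2, t⟫ : ℂ) * Φ p‖ := by
    simpa only [norm_mul, Circle.norm_coe, one_mul] using hΦ.integrable_mul_norm (by fun_prop)
  simp only [h_snd, h_fst]
  rw [D₂.apply_clm_superposition ρ measurable_snd hΨ₂ h_moment₂,
    D₁.apply_clm_superposition ρ measurable_fst hΨ₁ h_moment₁, ← map_add, ← integral_add
      (D₂.integrable_symbol_mul_superposition measurable_snd hΨ₂.1 h_moment₂ t)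
      (D₁.integrable_symbol_mul_superposition measurable_fst hΨ₁.1 h_moment₁ x)]
  simp only [jointFourierInv, jointSymbol, AddChar.map_add_eq_mul, Circle.coe_mul]
  congr 2 with p
  ring

lemma IsDistributionalSolution.isSpectralSolution {u : V × W → ℝ}
    (hu : IsDistributionalSolution D₁ D₂ u) :
    IsSpectralSolution D₁ D₂ fun p => (u p : ℂ) := by
  rintro Φ _ hΦ rfl h_slice h_outer
  obtain ⟨φ, hφ⟩ := hΦ.exists_schwartz_eq_jointFourierInv
  set K := jointFourierInv fun p => jointSymbol D₁ D₂ p * Φ p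
  have h_clm : ∀ ρ : ℂ →L[ℝ] ℝ, ρ (∫ t, ∫ x, (u (x, t) : ℂ) * K x t) = 0 := fun ρ => by
    have h_test := hu (SchwartzMap.postcompCLM ρ φ)
    simp only [SchwartzMap.postcompCLM_apply, hφ, apply_add_apply_clm_jointFourierInv hΦ] at h_test
    rw [← ρ.integral_comp_comm h_outer, ← h_test]
    refine integral_congr_ae (h_slice.mono fun t ht => ?_)
    simp only
    rw [← ρ.integral_comp_comm ht]
    simp only [← Complex.real_smul, map_smul, smul_eq_mul]
    rfl
  exact Complex.ext (h_clm Complex.reCLM) (h_clm Complex.imCLM)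

end Equation

lemma ae_eq_zero_of_setIntegral_prod_eq_zero {X Y E : Type*} [MeasurableSpace X]
    [MeasurableSpace Y] [NormedAddCommGroup E] [NormedSpace ℝ E] [CompleteSpace E]
    {μ : Measure (X × Y)} {F : X × Y → E} (hF : Integrable F μ)
    (h : ∀ A B, MeasurableSet A → MeasurableSet B → ∫ p in A ×ˢ B, F p ∂μ = 0) :
    ∀ᵐ p ∂μ, F p = 0 := by
  suffices h_set : ∀ S, MeasurableSet S → ∫ p in S, F p ∂μ = 0 from
    hF.ae_eq_zero_of_forall_setIntegral_eq_zero fun S hS _ => h_set S hS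
  intro S hS
  induction S, hS using MeasurableSpace.induction_on_inter generateFrom_prod.symm
    isPiSystem_prod with
  | empty => simp
  | basic S hS =>
    obtain ⟨A, hA, B, hB, rfl⟩ := hS
    exact h A B hA hB
  | compl S hS ih =>
    have h_univ := h univ univ .univ .univ
    rw [univ_prod_univ, setIntegral_univ, ← integral_add_compl hS hF, ih, zero_add] at h_univ
    exact h_univ
  | iUnion S h_disj hS ih => simp [integral_iUnion hS h_disj hF.integrableOn, ih]

section Dominated

variable {V : Type*} [NormedAddCommGroup V] [InnerProductSpace ℝ V] [MeasurableSpace V]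

/-- Measurable functions bounded by a multiple of `decayWeight`. -/
def IsDominated (f : V → ℂ) : Prop :=
  Measurable f ∧ ∃ C, ∀ x, ‖f x‖ ≤ C * decayWeight x

variable [BorelSpace V]

lemma isDominated_schwartz (f : SchwartzMap V ℂ) : IsDominated f :=
  ⟨f.continuous.measurable, exists_schwartz_norm_le_decayWeight f⟩

lemma isDominated_indicator_decayWeight {B : Set V} (hB : MeasurableSet B) :
    IsDominated (B.indicator fun x => (decayWeight x : ℂ)) := by
  refine ⟨(Complex.measurable_ofReal.comp continuous_decayWeight.measurable).indicator hB, 1,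
    fun x => (norm_indicator_le_norm_self _ _).trans ?_⟩
  rw [Complex.norm_real, Real.norm_of_nonneg (decayWeight_pos x).le, one_mul]

variable [FiniteDimensional ℝ V] {Φ v : V → ℂ}

lemma IsTest.isDominated_fourierInv (hΦ : IsTest Φ) : IsDominated (𝓕⁻ Φ) := by
  obtain ⟨f, hf, -⟩ := hΦ.exists_schwartz
  exact hf ▸ isDominated_schwartz f

lemma IsTest.integrable_mul_fourierInv (hΦ : IsTest Φ)
    (hv : Integrable fun x => decayWeight x • v x) : Integrable fun x => v x * 𝓕⁻ Φ x := by
  obtain ⟨f, hf, -⟩ := hΦ.exists_schwartz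
  exact hf ▸ integrable_mul_schwartz_of_decayWeight hv f

end Dominated

section Slices

variable {V W : Type*}
  [NormedAddCommGroup V] [InnerProductSpace ℝ V] [FiniteDimensional ℝ V] [MeasurableSpace V]
  [BorelSpace V]
  [NormedAddCommGroup W] [InnerProductSpace ℝ W] [FiniteDimensional ℝ W] [MeasurableSpace W]
  [BorelSpace W]

/-- Integrability against the product of the weights `decayWeight`. -/
def HasDecay (u : V × W → ℂ) : Prop :=
  Integrable fun p : V × W => (decayWeight p.1 * decayWeight p.2) • u p

namespace HasDecay

variable {u : V × W → ℂ} {f : V → ℂ} {g : W → ℂ}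

lemma swap (hu : HasDecay u) : HasDecay fun p : W × V => u p.swap := by
  have h_swap := Integrable.swap (μ := (volume : Measure V)) (ν := (volume : Measure W)) hu
  refine h_swap.congr (.of_forall fun p => ?_)
  simp only [Function.comp_apply, Prod.fst_swap, Prod.snd_swap, mul_comm]

lemma integrable_mul (hu : HasDecay u) (hf : IsDominated f) (hg : IsDominated g) :
    Integrable (fun p : V × W => u p * (f p.1 * g p.2)) (volume.prod volume) := by
  obtain ⟨hf_meas, C, hC⟩ := hf
  obtain ⟨hg_meas, C', hC'⟩ := hg
  have hV := (continuous_decayWeight (V := V)).measurable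
  have hW := (continuous_decayWeight (V := W)).measurable
  refine integrable_mul_of_norm_le_weight (C := C * C')
    (w := fun p : V × W => decayWeight p.1 * decayWeight p.2)
    (fun p => mul_pos (decayWeight_pos _) (decayWeight_pos _)) (by fun_prop) hu
    (Measurable.aestronglyMeasurable (by fun_prop)) fun p => ?_
  calc ‖f p.1 * g p.2‖ ≤ (C * decayWeight p.1) * (C' * decayWeight p.2) :=
        (norm_mul _ _).trans_le
          (mul_le_mul (hC _) (hC' _) (norm_nonneg _) ((norm_nonneg _).trans (hC _)))
    _ = C * C' * (decayWeight p.1 * decayWeight p.2) := by ring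

lemma integrable_mul_decayWeight (hu : HasDecay u) (hf : IsDominated f) :
    Integrable (fun p : V × W => decayWeight p.2 • (u p * f p.1)) (volume.prod volume) := by
  have h_int := hu.integrable_mul hf (isDominated_indicator_decayWeight (V := W) .univ)
  refine h_int.congr (.of_forall fun p => ?_)
  simp only [indicator_univ, Complex.real_smul]
  ring

lemma ae_integrable_slice (hu : HasDecay u) (hf : IsDominated f) :
    ∀ᵐ t, Integrable fun x => u (x, t) * f x := by
  filter_upwards [(hu.integrable_mul_decayWeight hf).prod_left_ae] with t ht
  exact (integrable_smul_iff (decayWeight_pos t).ne' _).1 ht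

lemma integrable_slice (hu : HasDecay u) (hf : IsDominated f) :
    Integrable fun t => decayWeight t • ∫ x, u (x, t) * f x := by
  simpa only [integral_smul] using (hu.integrable_mul_decayWeight hf).integral_prod_right

lemma integral_slice_comm (hu : HasDecay u) (hf : IsDominated f) (hg : IsDominated g) :
    ∫ x, (∫ t, u (x, t) * g t) * f x = ∫ t, (∫ x, u (x, t) * f x) * g t := by
  have h_swap := integral_integral_swap (f := fun x t => u (x, t) * (f x * g t))
    (hu.integrable_mul hf hg)
  simpa only [← integral_mul_const, mul_assoc, mul_comm (g _) (f _)] using h_swap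

end HasDecay

end Slices

section Multiplier

variable {V W : Type*} [NormedAddCommGroup V] [InnerProductSpace ℝ V]
  [NormedAddCommGroup W] [InnerProductSpace ℝ W] {Φ m : V → ℂ} {Ψ : W → ℂ}

lemma IsPuncturedTest.apply_zero (hΦ : IsPuncturedTest Φ) : Φ 0 = 0 :=
  hΦ.eventually_eq_zero.self_of_nhds

lemma IsPuncturedTest.mul_left (hΦ : IsPuncturedTest Φ)
    (hm : ∀ ξ ≠ 0, ContDiffAt ℝ ∞ m ξ) : IsPuncturedTest fun ξ => m ξ * Φ ξ where
  contDiff := by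
    refine contDiff_iff_contDiffAt.2 fun ξ => ?_
    rcases eq_or_ne ξ 0 with rfl | hξ
    · refine contDiffAt_const (c := (0 : ℂ)).congr_of_eventuallyEq ?_
      filter_upwards [hΦ.eventually_eq_zero] with η hη
      rw [hη, mul_zero]
    · exact (hm ξ hξ).mul hΦ.contDiff.contDiffAt
  hasCompactSupport := hΦ.hasCompactSupport.mul_left
  eventually_eq_zero := hΦ.eventually_eq_zero.mono fun η hη => by rw [hη, mul_zero]

lemma IsPuncturedTest.mul_prod {m : V × W → ℂ} (hΦ : IsPuncturedTest Φ) (hΨ : IsPuncturedTest Ψ)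
    (hm : ∀ p : V × W, p.1 ≠ 0 → p.2 ≠ 0 → ContDiffAt ℝ ∞ m p) :
    IsTest fun p => m p * (Φ p.1 * Ψ p.2) where
  contDiff := by
    refine contDiff_iff_contDiffAt.2 fun p => ?_
    by_cases h₁ : p.1 = 0
    · refine contDiffAt_const (c := (0 : ℂ)).congr_of_eventuallyEq ?_
      filter_upwards [continuousAt_fst.eventually (h₁ ▸ hΦ.eventually_eq_zero)] with η hη
      rw [hη, zero_mul, mul_zero]
    by_cases h₂ : p.2 = 0
    · refine contDiffAt_const (c := (0 : ℂ)).congr_of_eventuallyEq ?_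
      filter_upwards [continuousAt_snd.eventually (h₂ ▸ hΨ.eventually_eq_zero)] with η hη
      rw [hη, mul_zero, mul_zero]
    · exact (hm p h₁ h₂).mul (hΦ.toIsTest.prod hΨ.toIsTest).contDiff.contDiffAt
  hasCompactSupport := (hΦ.toIsTest.prod hΨ.toIsTest).hasCompactSupport.mul_left

variable [FiniteDimensional ℝ V] [MeasurableSpace V] [BorelSpace V]
  [FiniteDimensional ℝ W] [MeasurableSpace W] [BorelSpace W]
  {D : DifferenceOperator V} {D₁ : DifferenceOperator V} {D₂ : DifferenceOperator W}

lemma IsTest.integrable_symbol_mul (hΦ : IsTest Φ) : Integrable fun ξ => D.symbol ξ * Φ ξ := by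
  simpa using D.integrable_symbol_mul_superposition measurable_id hΦ.integrable.1
    (hΦ.integrable_mul_norm (by fun_prop)) 0

lemma IsTest.fourierInv_symbol_mul (hΦ : IsTest Φ) :
    𝓕⁻ (fun ξ => D.symbol ξ * Φ ξ) = D.apply (𝓕⁻ Φ) := by
  have h_inv : ∀ F : V → ℂ, 𝓕⁻ F = fun x => ∫ ξ, (𝐞 ⟪ξ, x⟫ : ℂ) * F ξ := fun F => by
    ext x
    simp only [Real.fourierInv_eq, Circle.smul_def, smul_eq_mul]
  ext x
  rw [h_inv, h_inv]
  exact (D.apply_superposition measurable_id hΦ.integrable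
    (hΦ.integrable_mul_norm (by fun_prop)) x).symm

lemma IsTest.integrable_fourierInv_symbol_mul (hΦ : IsTest Φ) :
    Integrable (𝓕⁻ fun ξ => D.symbol ξ * Φ ξ) := by
  obtain ⟨f, hf, -⟩ := hΦ.exists_schwartz
  rw [hΦ.fourierInv_symbol_mul, ← hf]
  exact D.integrable_apply f

lemma IsTest.integral_fourierInv_symbol_mul (hΦ : IsTest Φ) :
    ∫ x, 𝓕⁻ (fun ξ => D.symbol ξ * Φ ξ) x = 0 := by
  obtain ⟨f, hf, -⟩ := hΦ.exists_schwartz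
  rw [hΦ.fourierInv_symbol_mul, ← hf]
  exact D.integral_apply_eq_zero f

lemma jointFourierInv_jointSymbol_mul (hΦ : IsTest Φ) (hΨ : IsTest Ψ) (x : V) (t : W) :
    jointFourierInv (fun p => jointSymbol D₁ D₂ p * (Φ p.1 * Ψ p.2)) x t =
      𝓕⁻ (fun ξ => D₁.symbol ξ * Φ ξ) x * 𝓕⁻ Ψ t +
        𝓕⁻ Φ x * 𝓕⁻ (fun τ => D₂.symbol τ * Ψ τ) t := by
  rw [← jointFourierInv_mul, ← jointFourierInv_mul, ← jointFourierInv_add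
    (hΦ.integrable_symbol_mul.mul_prod hΨ.integrable)
    (hΦ.integrable.mul_prod hΨ.integrable_symbol_mul)]
  congr 1 with p
  rw [jointSymbol]
  ring

lemma DifferenceOperator.IsElliptic.symbol_ne_zero (hD : D.IsElliptic) {ξ : V} (hξ : ξ ≠ 0) :
    D.symbol ξ ≠ 0 := fun h => by simpa [h] using hD.re_pos ξ hξ

lemma DifferenceOperator.IsElliptic.exists_symbol_mul_eq (hD : D.IsElliptic)
    (hΦ : IsPuncturedTest Φ) :
    ∃ Φ' : V → ℂ, IsPuncturedTest Φ' ∧ (fun ξ => D.symbol ξ * Φ' ξ) = Φ := by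
  refine ⟨fun ξ => (D.symbol ξ)⁻¹ * Φ ξ,
    hΦ.mul_left fun ξ hξ => (hD.contDiffAt ξ hξ).inv (hD.symbol_ne_zero hξ), ?_⟩
  ext ξ
  rcases eq_or_ne ξ 0 with rfl | hξ
  · simp [hΦ.apply_zero]
  · rw [mul_inv_cancel_left₀ (hD.symbol_ne_zero hξ)]

lemma jointSymbol_ne_zero (hD₁ : D₁.IsElliptic) (hD₂ : D₂.IsElliptic) {p : V × W}
    (h₁ : p.1 ≠ 0) (h₂ : p.2 ≠ 0) : jointSymbol D₁ D₂ p ≠ 0 := fun h => by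
  have h_re := add_pos (hD₁.re_pos _ h₁) (hD₂.re_pos _ h₂)
  rw [← Complex.add_re, ← jointSymbol, h, Complex.zero_re] at h_re
  exact h_re.false

lemma exists_jointSymbol_mul_eq (hD₁ : D₁.IsElliptic) (hD₂ : D₂.IsElliptic)
    (hΦ : IsPuncturedTest Φ) (hΨ : IsPuncturedTest Ψ) :
    ∃ Θ : V × W → ℂ, IsTest Θ ∧ (fun p => jointSymbol D₁ D₂ p * Θ p) = fun p => Φ p.1 * Ψ p.2 := by
  refine ⟨fun p => (jointSymbol D₁ D₂ p)⁻¹ * (Φ p.1 * Ψ p.2),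
    hΦ.mul_prod hΨ fun p h₁ h₂ => ContDiffAt.inv ?_ (jointSymbol_ne_zero hD₁ hD₂ h₁ h₂), ?_⟩
  · exact ((hD₁.contDiffAt _ h₁).comp p contDiffAt_fst).add
      ((hD₂.contDiffAt _ h₂).comp p contDiffAt_snd)
  · ext p
    by_cases h₁ : p.1 = 0
    · simp [h₁, hΦ.apply_zero]
    by_cases h₂ : p.2 = 0
    · simp [h₂, hΨ.apply_zero]
    rw [mul_inv_cancel_left₀ (jointSymbol_ne_zero hD₁ hD₂ h₁ h₂)]

end Multiplier

section Liouville

variable {V W : Type*}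
  [NormedAddCommGroup V] [InnerProductSpace ℝ V] [FiniteDimensional ℝ V] [MeasurableSpace V]
  [BorelSpace V]
  [NormedAddCommGroup W] [InnerProductSpace ℝ W] [FiniteDimensional ℝ W] [MeasurableSpace W]
  [BorelSpace W]
  {u : V × W → ℂ}

lemma HasDecay.ae_eq_of_slices {v : W → ℂ} (hu : HasDecay u)
    (hv : Integrable fun t => decayWeight t • v t)
    (h_slice : ∀ g, IsDominated g → ∀ᵐ x, ∫ t, u (x, t) * g t = ∫ t, v t * g t) :
    ∀ᵐ p : V × W, u p = v p.2 := by
  have h_diff : Integrable (fun p : V × W => (decayWeight p.1 * decayWeight p.2) • (u p - v p.2))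
      (volume.prod volume) := by
    refine (Integrable.sub hu (integrable_decayWeight.smul_prod hv)).congr (.of_forall fun p => ?_)
    simp only [Pi.sub_apply, smul_sub, mul_smul]
  have h_zero := ae_eq_zero_of_setIntegral_prod_eq_zero h_diff fun A B _ hB => by
    set g : W → ℂ := B.indicator fun t => (decayWeight t : ℂ) with hg_def
    have hg : IsDominated g := isDominated_indicator_decayWeight hB
    have mul_g : ∀ (F : W → ℂ) t, F t * g t = B.indicator (fun t => decayWeight t • F t) t :=
      fun F t => by by_cases ht : t ∈ B <;> simp [hg_def, ht, mul_comm]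
    have hvg : Integrable fun t => v t * g t :=
      (hv.indicator hB).congr (.of_forall fun t => (mul_g v t).symm)
    rw [setIntegral_prod _ h_diff.integrableOn]
    refine integral_eq_zero_of_ae (ae_restrict_of_ae ?_)
    filter_upwards [h_slice g hg, hu.swap.ae_integrable_slice hg] with x h_eq hug
    have h_factor : ∀ t, B.indicator
        (fun t => (decayWeight x * decayWeight t) • (u (x, t) - v t)) t =
          decayWeight x • (u (x, t) * g t - v t * g t) := fun t => by
      rw [← sub_mul, mul_g fun t => u (x, t) - v t]
      by_cases ht : t ∈ B <;> simp [ht, mul_assoc]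
    simp only [Prod.swap_prod_mk] at hug
    rw [← integral_indicator hB, integral_congr_ae (.of_forall h_factor), integral_smul,
      integral_sub hug hvg, h_eq, sub_self, smul_zero, Pi.zero_apply]
  filter_upwards [h_zero] with p hp
  exact sub_eq_zero.1 ((smul_eq_zero.1 hp).resolve_left
    (mul_pos (decayWeight_pos p.1) (decayWeight_pos p.2)).ne')

namespace IsSpectralSolution

variable {D₁ : DifferenceOperator V} {D₂ : DifferenceOperator W} {Φ : V → ℂ}

lemma ae_const_slice (hu_sol : IsSpectralSolution D₁ D₂ u) (hD₁ : D₁.IsElliptic)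
    (hD₂ : D₂.IsElliptic) (hu : HasDecay u) (hΦ : IsPuncturedTest Φ) :
    ∃ c : ℂ, ∀ᵐ t, ∫ x, u (x, t) * 𝓕⁻ Φ x = c := by
  have hΦ_dom := hΦ.toIsTest.isDominated_fourierInv
  refine ae_const_of_puncturedTest (hu.integrable_slice hΦ_dom) fun Ψ hΨ => ?_
  obtain ⟨Θ, hΘ, hΘ_eq⟩ := exists_jointSymbol_mul_eq hD₁ hD₂ hΦ hΨ
  have h_test := hu_sol Θ (fun x t => 𝓕⁻ Φ x * 𝓕⁻ Ψ t) hΘ <| by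
    ext x t
    rw [hΘ_eq, jointFourierInv_mul]
  simp only [← mul_assoc, integral_mul_const] at h_test
  exact h_test ((hu.ae_integrable_slice hΦ_dom).mono fun t ht => ht.mul_const _)
    (hΨ.toIsTest.integrable_mul_fourierInv (hu.integrable_slice hΦ_dom))

lemma ae_slice_eq_zero (hu_sol : IsSpectralSolution D₁ D₂ u) (hD₁ : D₁.IsElliptic)
    (hD₂ : D₂.IsElliptic) (hu : HasDecay u) (hΦ : IsPuncturedTest Φ) :
    ∀ᵐ t, ∫ x, u (x, t) * 𝓕⁻ Φ x = 0 := by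
  obtain ⟨Φ', hΦ', hΦ'_eq⟩ := hD₁.exists_symbol_mul_eq hΦ
  obtain ⟨c, hc⟩ := hu_sol.ae_const_slice hD₁ hD₂ hu hΦ
  obtain ⟨c', hc'⟩ := hu_sol.ae_const_slice hD₁ hD₂ hu hΦ'
  obtain ⟨X, hX, -, hX_one⟩ := exists_schwartz_fourier_eq_cutoff (V := W)
  have h_cutoff := isTest_cutoff (V := W)
  set A := 𝓕⁻ fun τ => D₂.symbol τ * cutoff τ
  have hK : jointFourierInv (fun p => jointSymbol D₁ D₂ p * (Φ' p.1 * cutoff p.2)) =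
      fun x t => 𝓕⁻ Φ x * X t + 𝓕⁻ Φ' x * A t := by
    ext x t
    rw [jointFourierInv_jointSymbol_mul hΦ'.toIsTest h_cutoff, hΦ'_eq, hX]
  have h_slice : ∀ᵐ t, Integrable (fun x => u (x, t) * (𝓕⁻ Φ x * X t + 𝓕⁻ Φ' x * A t)) ∧
      ∫ x, u (x, t) * (𝓕⁻ Φ x * X t + 𝓕⁻ Φ' x * A t) = c * X t + c' * A t := by
    filter_upwards [hc, hc', hu.ae_integrable_slice hΦ.toIsTest.isDominated_fourierInv,
      hu.ae_integrable_slice hΦ'.toIsTest.isDominated_fourierInv] with t h h' h_int h_int'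
    simp_rw [mul_add, ← mul_assoc (u _)]
    refine ⟨(h_int.mul_const _).add (h_int'.mul_const _), ?_⟩
    rw [integral_add (h_int.mul_const _) (h_int'.mul_const _), integral_mul_const,
      integral_mul_const, h, h']
  have hX_int : Integrable fun t => c * X t := X.integrable.const_mul c
  have hA_int : Integrable fun t => c' * A t :=
    h_cutoff.integrable_fourierInv_symbol_mul.const_mul c'
  have h_zero := hu_sol _ _ (hΦ'.toIsTest.prod h_cutoff) hK (h_slice.mono fun t ht => ht.1)
    ((hX_int.add hA_int).congr (h_slice.mono fun t ht => ht.2.symm))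
  rw [integral_congr_ae (h_slice.mono fun t ht => ht.2), integral_add hX_int hA_int,
    integral_const_mul, integral_const_mul, h_cutoff.integral_fourierInv_symbol_mul, hX_one,
    mul_one, mul_zero, add_zero] at h_zero
  rwa [h_zero] at hc

lemma ae_eq_snd (hu_sol : IsSpectralSolution D₁ D₂ u) (hD₁ : D₁.IsElliptic)
    (hD₂ : D₂.IsElliptic) (hu : HasDecay u) :
    ∃ v : W → ℂ, (Integrable fun t => decayWeight t • v t) ∧ ∀ᵐ p : V × W, u p = v p.2 := by
  obtain ⟨X, -, -, hX_one⟩ := exists_schwartz_fourier_eq_cutoff (V := V)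
  have hX_dom := isDominated_schwartz X
  refine ⟨fun t => ∫ x, u (x, t) * X x, hu.integrable_slice hX_dom,
    hu.ae_eq_of_slices (hu.integrable_slice hX_dom) fun g hg => ?_⟩
  have hug : Integrable fun x => decayWeight x • ∫ t, u (x, t) * g t := hu.swap.integrable_slice hg
  obtain ⟨k, hk⟩ := ae_const_of_puncturedTest hug fun Φ hΦ => by
    rw [hu.integral_slice_comm hΦ.toIsTest.isDominated_fourierInv hg]
    refine integral_eq_zero_of_ae ?_
    filter_upwards [hu_sol.ae_slice_eq_zero hD₁ hD₂ hu hΦ] with t ht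
    rw [ht, zero_mul, Pi.zero_apply]
  have h_mean := hu.integral_slice_comm hX_dom hg
  rw [integral_congr_ae (hk.mono fun x hx => congrArg (· * X x) hx), integral_const_mul, hX_one,
    mul_one] at h_mean
  exact hk.mono fun x hx => hx.trans h_mean

lemma ae_const_of_ae_eq_snd {v : W → ℂ} (hu_sol : IsSpectralSolution D₁ D₂ u)
    (hD₂ : D₂.IsElliptic) (hv : Integrable fun t => decayWeight t • v t)
    (huv : ∀ᵐ p : V × W, u p = v p.2) : ∃ c : ℂ, ∀ᵐ t, v t = c := by
  obtain ⟨X, hX, -, hX_one⟩ := exists_schwartz_fourier_eq_cutoff (V := V)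
  have h_cutoff := isTest_cutoff (V := V)
  set B := 𝓕⁻ fun ξ => D₁.symbol ξ * cutoff ξ
  have huv_slice : ∀ᵐ t, ∀ᵐ x : V, u (x, t) = v t :=
    Measure.ae_ae_of_ae_prod <| (Measure.measurePreserving_swap (μ := (volume : Measure W))
      (ν := (volume : Measure V))).quasiMeasurePreserving.ae huv
  refine ae_const_of_puncturedTest hv fun Ψ hΨ => ?_
  obtain ⟨Ψ', hΨ', hΨ'_eq⟩ := hD₂.exists_symbol_mul_eq hΨ
  have hK : jointFourierInv (fun p : V × W => jointSymbol D₁ D₂ p * (cutoff p.1 * Ψ' p.2)) =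
      fun x t => B x * 𝓕⁻ Ψ' t + X x * 𝓕⁻ Ψ t := by
    ext x t
    rw [jointFourierInv_jointSymbol_mul h_cutoff hΨ'.toIsTest, hΨ'_eq, hX]
  have h_slice : ∀ᵐ t, Integrable (fun x => u (x, t) * (B x * 𝓕⁻ Ψ' t + X x * 𝓕⁻ Ψ t)) ∧
      ∫ x, u (x, t) * (B x * 𝓕⁻ Ψ' t + X x * 𝓕⁻ Ψ t) = v t * 𝓕⁻ Ψ t := by
    filter_upwards [huv_slice] with t ht
    have hB_int : Integrable fun x => B x * 𝓕⁻ Ψ' t :=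
      h_cutoff.integrable_fourierInv_symbol_mul.mul_const _
    have hX_int : Integrable fun x => X x * 𝓕⁻ Ψ t := X.integrable.mul_const _
    have h_eq : (fun x => u (x, t) * (B x * 𝓕⁻ Ψ' t + X x * 𝓕⁻ Ψ t)) =ᵐ[volume]
        fun x => v t * (B x * 𝓕⁻ Ψ' t + X x * 𝓕⁻ Ψ t) := ht.mono fun x hx => by simp only [hx]
    refine ⟨((hB_int.add hX_int).const_mul (v t)).congr h_eq.symm, ?_⟩
    rw [integral_congr_ae h_eq, integral_const_mul, integral_add hB_int hX_int, integral_mul_const,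
      integral_mul_const, h_cutoff.integral_fourierInv_symbol_mul, hX_one, zero_mul, zero_add,
      one_mul]
  have h_zero := hu_sol _ _ (h_cutoff.prod hΨ'.toIsTest) hK (h_slice.mono fun t ht => ht.1)
    ((hΨ.toIsTest.integrable_mul_fourierInv hv).congr (h_slice.mono fun t ht => ht.2.symm))
  rwa [integral_congr_ae (h_slice.mono fun t ht => ht.2)] at h_zero

lemma ae_const (hu_sol : IsSpectralSolution D₁ D₂ u) (hD₁ : D₁.IsElliptic) (hD₂ : D₂.IsElliptic)
    (hu : HasDecay u) : ∃ c : ℂ, ∀ᵐ p : V × W, u p = c := by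
  obtain ⟨v, hv, huv⟩ := hu_sol.ae_eq_snd hD₁ hD₂ hu
  obtain ⟨c, hc⟩ := hu_sol.ae_const_of_ae_eq_snd hD₂ hv huv
  refine ⟨c, ?_⟩
  filter_upwards [huv, Measure.quasiMeasurePreserving_snd.ae hc] with p hp hp'
  exact hp.trans hp'

end IsSpectralSolution

lemma IsDistributionalSolution.ae_const {D₁ : DifferenceOperator V} {D₂ : DifferenceOperator W}
    {u : V × W → ℝ} (hu_sol : IsDistributionalSolution D₁ D₂ u) (hD₁ : D₁.IsElliptic)
    (hD₂ : D₂.IsElliptic) (hu : HasDecay fun p => (u p : ℂ)) :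
    ∃ c : ℝ, ∀ᵐ p : V × W, u p = c := by
  obtain ⟨c, hc⟩ := hu_sol.isSpectralSolution.ae_const hD₁ hD₂ hu
  exact ⟨c.re, hc.mono fun p hp => by rw [← hp, Complex.ofReal_re]⟩

end Liouville

section Weights

lemma one_add_rpow_le {r p : ℝ} (hr : 0 ≤ r) (hp : 0 ≤ p) {m : ℕ} (hpm : p ≤ m) :
    1 + r ^ p ≤ 2 * (1 + r) ^ m := by
  have h_one : 1 ≤ (1 + r) ^ m := one_le_pow₀ (by linarith)
  have h_rpow : r ^ p ≤ (1 + r) ^ m := calc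
    r ^ p ≤ (1 + r) ^ p := Real.rpow_le_rpow hr (by linarith) hp
    _ ≤ (1 + r) ^ (m : ℝ) := Real.rpow_le_rpow_of_exponent_le (by linarith) hpm
    _ = (1 + r) ^ m := Real.rpow_natCast _ _
  linarith

lemma decayWeight_le_inv_one_add_rpow {V : Type*} [NormedAddCommGroup V] [InnerProductSpace ℝ V]
    {p : ℝ} (hp : 0 ≤ p) (hpm : p ≤ Module.finrank ℝ V + 1) (x : V) :
    decayWeight x ≤ 2 * (1 + ‖x‖ ^ p)⁻¹ := by
  rw [decayWeight, ← div_eq_mul_inv, inv_le_comm₀ (by positivity) (by positivity), inv_div,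
    div_le_iff₀' two_pos]
  exact one_add_rpow_le (norm_nonneg x) hp (by exact_mod_cast hpm)

lemma hasDecay_of_integrable_div_one_add_rpow {V W : Type*} [NormedAddCommGroup V]
    [InnerProductSpace ℝ V] [FiniteDimensional ℝ V] [MeasurableSpace V] [BorelSpace V]
    [NormedAddCommGroup W] [InnerProductSpace ℝ W] [FiniteDimensional ℝ W] [MeasurableSpace W]
    [BorelSpace W] {p q : ℝ} (hp : 0 ≤ p) (hpV : p ≤ Module.finrank ℝ V + 1) (hq : 0 ≤ q)
    (hqW : q ≤ Module.finrank ℝ W + 1) {u : V × W → ℝ} (hu_meas : AEStronglyMeasurable u)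
    (hu : Integrable fun z : V × W => |u z| / ((1 + ‖z.1‖ ^ p) * (1 + ‖z.2‖ ^ q))) :
    HasDecay fun z => (u z : ℂ) := by
  have hV := continuous_decayWeight (V := V)
  have hW := continuous_decayWeight (V := W)
  have h_weight : Continuous fun z : V × W => decayWeight z.1 * decayWeight z.2 := by fun_prop
  refine (hu.const_mul 4).mono' (h_weight.aestronglyMeasurable.smul
    (Complex.continuous_ofReal.comp_aestronglyMeasurable hu_meas)) (.of_forall fun z => ?_)
  have hVz := decayWeight_pos z.1
  have hWz := decayWeight_pos z.2
  rw [norm_smul, Complex.norm_real, Real.norm_of_nonneg (mul_pos hVz hWz).le, Real.norm_eq_abs]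
  calc decayWeight z.1 * decayWeight z.2 * |u z|
      ≤ (2 * (1 + ‖z.1‖ ^ p)⁻¹) * (2 * (1 + ‖z.2‖ ^ q)⁻¹) * |u z| := by
        gcongr
        · exact decayWeight_le_inv_one_add_rpow hp hpV z.1
        · exact decayWeight_le_inv_one_add_rpow hq hqW z.2
    _ = 4 * (|u z| / ((1 + ‖z.1‖ ^ p) * (1 + ‖z.2‖ ^ q))) := by
        rw [div_eq_mul_inv, mul_inv]
        ring

end Weights

theorem liouville_dual_fractional_small_s_general
    {n : ℕ} (hn : n ≠ 0) {α s : ℝ} (hα0 : 0 < α) (hα1 : α < 1) (hs0 : 0 < s) (hs1 : s ≤ 1 / 2)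
    {u : EuclideanSpace ℝ (Fin n) × ℝ → ℝ} (hu_meas : AEStronglyMeasurable u)
    (hu_space : Integrable (fun p : EuclideanSpace ℝ (Fin n) × ℝ =>
      |u p| / ((1 + ‖p.1‖ ^ ((n : ℝ) + 2 * s)) * (1 + |p.2| ^ (1 + α)))))
    (hu_sol : ∀ φ : SchwartzMap (EuclideanSpace ℝ (Fin n) × ℝ) ℝ,
      ∫ t : ℝ, ∫ x : EuclideanSpace ℝ (Fin n),
        u (x, t) * (marchaudRight α (⇑φ) x t + fracLap s (⇑φ) x t) = 0) :
    ∃ c : ℝ, ∀ᵐ p : EuclideanSpace ℝ (Fin n) × ℝ, u p = c := by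
  have : NeZero n := ⟨hn⟩
  have hs1' : s < 1 := by linarith
  have h_sol : IsDistributionalSolution (fracLapOperator n hs0 hs1') (marchaudOperator hα0 hα1) u :=
    fun φ => by simpa only [marchaudOperator_apply, fracLapOperator_apply] using hu_sol φ
  have h_decay : HasDecay fun p => (u p : ℂ) :=
    hasDecay_of_integrable_div_one_add_rpow (by positivity)
      (by rw [finrank_euclideanSpace_fin]; linarith) (by positivity)
      (by rw [Module.finrank_self, Nat.cast_one]; linarith) hu_meas hu_space
  exact h_sol.ae_const (isElliptic_fracLapOperator hs0 hs1') (isElliptic_marchaudOperator hα0 hα1)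
    h_decay

/-- Liouville theorem for `∂_t^α u + (-Δ)^s u = 0` in `ℝⁿ × ℝ` for
`0 < s ≤ 1/2`: every distributional solution `u ∈ 𝓛_{2s,α}(ℝⁿ×ℝ)` is a.e. constant. -/
theorem liouville_dual_fractional_small_s
    (n : ℕ) (hn : 2 ≤ n) (α s : ℝ) (hα0 : 0 < α) (hα1 : α < 1)
    (hs0 : 0 < s) (hs1 : s ≤ 1 / 2)
    (u : EuclideanSpace ℝ (Fin n) × ℝ → ℝ)
    (hu_loc : LocallyIntegrable u)
    (hu_space : Integrable (fun p : EuclideanSpace ℝ (Fin n) × ℝ =>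
      |u p| / ((1 + ‖p.1‖ ^ ((n : ℝ) + 2 * s)) * (1 + |p.2| ^ (1 + α)))))
    (hu_sol : ∀ φ : SchwartzMap (EuclideanSpace ℝ (Fin n) × ℝ) ℝ,
      ∫ t : ℝ, ∫ x : EuclideanSpace ℝ (Fin n),
        u (x, t) * (marchaudRight α (⇑φ) x t + fracLap s (⇑φ) x t) = 0) :
    ∃ c : ℝ, ∀ᵐ p : EuclideanSpace ℝ (Fin n) × ℝ ∂volume, u p = c := by
  exact liouville_dual_fractional_small_s_general (by omega) hα0 hα1 hs0 hs1
    hu_loc.aestronglyMeasurable hu_space hu_sol
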